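/- Let α,β > −1/2 with α − β > −4, and let 0 < ε < π. Then there exist constants c > 0 depending only on α,β and C > 0 depending only on ε,α,β such that for every integer ℓ ≥ 1 and every θ with c/ℓ ≤ θ ≤ π − ε, |P_ℓ^{(α,β)}(cos θ) − ℓ̃^{−1/2} m_{α,β}(θ) [cos ω_α(ℓ̃θ) + ℓ̃^{−1} F^{(1)}_{α,β}(ℓ̃,θ)]| ≤ C ℓ̃^{−1/2} m_{α,β}(θ) (ℓ^{û(α)} θ^{ν̂(α)} + ℓ^{−2} θ^{−2}), where ℓ̃ := ℓ + (α+β+1)/2, F^{(1)}_{α,β}(ℓ̃,θ) := F^{(2)}_{α,β}(θ) cos ω_{α+1}(ℓ̃θ) − (αβ/2) cos ω_α(ℓ̃θ), F^{(2)}_{α,β}(θ) := ((β²−α²)/4) tan(θ/2) − ((4α²−1)/8) cot θ, û(α) := −2 + frac(α+1/2) (frac denotes fractional part), and ν̂(α) := α+5/2 if α < 1/2 and ν̂(α) := α+1/2 if α ≥ 1/2. -/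

import Mathlib

open MeasureTheory Real
open scoped ENNReal NNReal

/-- The classical Jacobi polynomial `P_n^{(a,b)}` (hypergeometric representation,
normalised so that `P_n^{(a,b)}(1) = Γ(n+a+1)/(Γ(n+1)Γ(a+1))`). -/
noncomputable def jacobiP (a b : ℝ) (n : ℕ) (x : ℝ) : ℝ :=
  ∑ s ∈ Finset.range (n + 1),
    (Real.Gamma ((n : ℝ) + a + 1) /
        (Real.Gamma ((s : ℝ) + a + 1) * (Nat.factorial (n - s) : ℝ))) *
      (Real.Gamma ((n : ℝ) + b + 1) /
        (Real.Gamma ((n : ℝ) - (s : ℝ) + b + 1) * (Nat.factorial s : ℝ))) *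
      ((x - 1) / 2) ^ s * ((x + 1) / 2) ^ (n - s)

/-- `M_ℓ^{(a,b)}`, the `L₂(w_{a,b})` normalisation constant of `P_ℓ^{(a,b)}`. -/
noncomputable def jacobiM (a b : ℝ) (ℓ : ℕ) : ℝ :=
  (2 : ℝ) ^ (a + b + 1) / (2 * (ℓ : ℝ) + a + b + 1) *
    (Real.Gamma ((ℓ : ℝ) + a + 1) * Real.Gamma ((ℓ : ℝ) + b + 1)) /
    (Real.Gamma ((ℓ : ℝ) + 1) * Real.Gamma ((ℓ : ℝ) + a + b + 1))

/-- The generalised Dirichlet kernel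
`v_L^{(a,b)}(t,s) = Σ_{ℓ=0}^{L} (M_ℓ^{(a,b)})⁻¹ P_ℓ^{(a,b)}(t) P_ℓ^{(a,b)}(s)`. -/
noncomputable def dirichletJ (a b : ℝ) (L : ℕ) (t s : ℝ) : ℝ :=
  ∑ ℓ ∈ Finset.range (L + 1), (jacobiM a b ℓ)⁻¹ * jacobiP a b ℓ t * jacobiP a b ℓ s

/-- The filtered Jacobi kernel
`v_{L,g}^{(a,b)}(t,s) = Σ_{ℓ=0}^{2L−1} g(ℓ/L) (M_ℓ^{(a,b)})⁻¹ P_ℓ^{(a,b)}(t) P_ℓ^{(a,b)}(s)`. -/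
noncomputable def filteredJ (a b : ℝ) (g : ℝ → ℝ) (L : ℕ) (t s : ℝ) : ℝ :=
  ∑ ℓ ∈ Finset.range (2 * L),
    g ((ℓ : ℝ) / (L : ℝ)) * (jacobiM a b ℓ)⁻¹ * jacobiP a b ℓ t * jacobiP a b ℓ s

/-- `Z(d,ℓ)`, the dimension of the space of spherical harmonics of degree `ℓ` on `S^d`. -/
noncomputable def Zdim (d ℓ : ℕ) : ℝ :=
  (2 * (ℓ : ℝ) + (d : ℝ) - 1) * Real.Gamma ((ℓ : ℝ) + (d : ℝ) - 1) /
    (Real.Gamma (d : ℝ) * Real.Gamma ((ℓ : ℝ) + 1))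

/-- The normalised Legendre polynomial `P_ℓ^{(d+1)}` for `S^d`. -/
noncomputable def normLegendre (d ℓ : ℕ) (t : ℝ) : ℝ :=
  jacobiP (((d : ℝ) - 2) / 2) (((d : ℝ) - 2) / 2) ℓ t /
    jacobiP (((d : ℝ) - 2) / 2) (((d : ℝ) - 2) / 2) ℓ 1

/-- The Dirichlet kernel on `S^d`: `v_L^{(d)}(t) = Σ_{ℓ=0}^L Z(d,ℓ) P_ℓ^{(d+1)}(t)`. -/
noncomputable def sphDirichlet (d L : ℕ) (t : ℝ) : ℝ :=
  ∑ ℓ ∈ Finset.range (L + 1), Zdim d ℓ * normLegendre d ℓ t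

/-- The filtered kernel on `S^d`: `v_{L,g}^{(d)}(t) = Σ_{ℓ=0}^∞ g(ℓ/L) Z(d,ℓ) P_ℓ^{(d+1)}(t)`. -/
noncomputable def sphFiltered (d : ℕ) (g : ℝ → ℝ) (L : ℕ) (t : ℝ) : ℝ :=
  ∑' ℓ : ℕ, g ((ℓ : ℝ) / (L : ℝ)) * Zdim d ℓ * normLegendre d ℓ t

/-- The surface area `|S^n| = 2π^{(n+1)/2}/Γ((n+1)/2)` of the unit sphere `S^n`. -/
noncomputable def sphereArea (n : ℕ) : ℝ :=
  2 * Real.pi ^ (((n : ℝ) + 1) / 2) / Real.Gamma (((n : ℝ) + 1) / 2)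

/-- `m_{a,b}(θ) = π^{−1/2} (sin(θ/2))^{−a−1/2} (cos(θ/2))^{−b−1/2}`. -/
noncomputable def mAB (a b θ : ℝ) : ℝ :=
  Real.pi ^ (-(1 / 2 : ℝ)) * Real.sin (θ / 2) ^ (-a - 1 / 2) *
    Real.cos (θ / 2) ^ (-b - 1 / 2)

/-- `ω_γ(z) = z − γπ/2 − π/4`. -/
noncomputable def omegaA (γ z : ℝ) : ℝ := z - γ * Real.pi / 2 - Real.pi / 4

/-- `F^{(2)}_{a,b}(θ) = ((b²−a²)/4) tan(θ/2) − ((4a²−1)/8) cot θ`. -/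
noncomputable def F2fn (a b θ : ℝ) : ℝ :=
  (b ^ 2 - a ^ 2) / 4 * Real.tan (θ / 2) - (4 * a ^ 2 - 1) / 8 * (Real.cos θ / Real.sin θ)

/-- `F^{(1)}_{a,b}(ℓ̃,θ) = F^{(2)}_{a,b}(θ) cos ω_{a+1}(ℓ̃θ) − (ab/2) cos ω_a(ℓ̃θ)`. -/
noncomputable def F1fn (a b lt θ : ℝ) : ℝ :=
  F2fn a b θ * Real.cos (omegaA (a + 1) (lt * θ)) - a * b / 2 * Real.cos (omegaA a (lt * θ))

/-- `û(a) = −2 + frac(a + 1/2)`. -/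
noncomputable def uHat (a : ℝ) : ℝ := -2 + Int.fract (a + 1 / 2)

/-- `ν̂(a) = a + 5/2` if `a < 1/2`, and `a + 1/2` if `a ≥ 1/2`. -/
noncomputable def nuHat (a : ℝ) : ℝ := if a < 1 / 2 then a + 5 / 2 else a + 1 / 2

/-!
The function `u θ = sin(θ/2)^(a+1/2) cos(θ/2)^(b+1/2) P_n^{(a,b)}(cos θ)` solves
`u'' + (N² + V) u = 0` with `N = n + (a+b+1)/2` and `V` a combination of `csc²(θ/2)` and
`sec²(θ/2)`. The two-term expression is a WKB approximation to `√(π N) u`: its coefficient `F`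
satisfies `F' = -V / 2`, so it solves the same equation up to a residual `O(1 / (N θ³))` away from
`π`. Hence the error `w` satisfies a forced
equation, and a Gronwall estimate for the energy `w'² + N² w²` between `θ` and `π / 2` bounds
`|w θ|` by a multiple of `1 / (N θ)²` as soon as `w = O(N⁻²)` and `w' = O(N⁻¹)` at `π / 2`.

The value of `P_n^{(a,b)}` at `cos (π / 2) = 0` is, up to a power of two, the `n`-th Taylor
coefficient of `(1 - z)^(n+b) (1 + z)^(n+a)`; Cauchy's formula on the unit circle turns it into
`∫_0^π sin^n` against a fixed amplitude, which Laplace's method and the Wallis integrals expand to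
relative order `n⁻²`. A contiguous relation expresses `u'` at `π / 2` through the same kind of value
with parameters `(a+1, b+1)`.
-/

namespace JacobiAsymptotics

open Filter Asymptotics Topology Set Finset

/-! ### Jacobi polynomials as coefficients of a product of binomial series -/

theorem choose_succ_mul (x : ℝ) (k : ℕ) :
    Ring.choose x (k + 1) * (k + 1) = Ring.choose x k * (x - k) := by
  simpa [mul_comm] using Ring.choose_smul_choose x k.le_succ

theorem choose_eq_Gamma_div {x : ℝ} {k : ℕ} (h : -1 < x - k) :
    Ring.choose x k = Gamma (x + 1) / (Gamma (x - k + 1) * k.factorial) := by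
  induction k with
  | zero =>
    have : Gamma (x + 1) ≠ 0 := (Gamma_pos_of_pos (by linarith [Nat.cast_zero (R := ℝ)])).ne'
    simp [this]
  | succ k ih =>
    push_cast at h
    have hΓ : Gamma (x - k) ≠ 0 := (Gamma_pos_of_pos (by linarith)).ne'
    have hxk : x - k ≠ 0 := by linarith
    have hrec := choose_succ_mul x k
    rw [ih (by linarith), Gamma_add_one hxk] at hrec
    rw [← mul_left_inj' (Nat.cast_add_one_ne_zero k : (k + 1 : ℝ) ≠ 0), hrec, Nat.factorial_succ,
      show x - (k + 1 : ℕ) + 1 = x - k by push_cast; ring]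
    push_cast
    field_simp

/-- The polynomial `∑ C(y, i) C(x, j) ((t - 1) / 2) ^ i ((t + 1) / 2) ^ j` over `i + j = n`, which
is `P_n^{(x - n, y - n)}(t)`. Keeping `x` and `y` fixed while `n` varies is what turns
differentiation and its adjoint into shifts of `n`. -/
noncomputable def jacobiSum (x y : ℝ) (n : ℕ) (t : ℝ) : ℝ :=
  ∑ p ∈ antidiagonal n,
    Ring.choose y p.1 * Ring.choose x p.2 * (((t - 1) / 2) ^ p.1 * ((t + 1) / 2) ^ p.2)

theorem jacobiP_eq_jacobiSum {a b : ℝ} (ha : -1 < a) (hb : -1 < b) (n : ℕ) (t : ℝ) :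
    jacobiP a b n t = jacobiSum (n + a) (n + b) n t := by
  rw [jacobiP, jacobiSum, Nat.sum_antidiagonal_eq_sum_range_succ_mk]
  refine sum_congr rfl fun s hs => ?_
  have hsn : s ≤ n := Nat.lt_succ_iff.1 (mem_range.1 hs)
  have hsn' : (s : ℝ) ≤ n := Nat.cast_le.2 hsn
  rw [choose_eq_Gamma_div (x := n + b) (by linarith),
    choose_eq_Gamma_div (x := n + a) (by rw [Nat.cast_sub hsn]; linarith), Nat.cast_sub hsn,
    show (n + a - (n - s) + 1 : ℝ) = s + a + 1 by ring,
    show (n + b - s + 1 : ℝ) = n - s + b + 1 by ring]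
  ring

theorem hasDerivAt_pow_mul_pow (i j : ℕ) (t : ℝ) :
    HasDerivAt (fun t : ℝ => ((t - 1) / 2) ^ i * ((t + 1) / 2) ^ j)
      ((i * ((t - 1) / 2) ^ (i - 1) * ((t + 1) / 2) ^ j +
        j * (((t - 1) / 2) ^ i * ((t + 1) / 2) ^ (j - 1))) / 2) t := by
  have hA := (((hasDerivAt_id t).sub_const 1).div_const 2).fun_pow i
  have hB := (((hasDerivAt_id t).add_const 1).div_const 2).fun_pow j
  exact (hA.fun_mul hB).congr_deriv (by simp only [id]; ring)

theorem hasDerivAt_jacobiSum (x y : ℝ) (n : ℕ) (t : ℝ) :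
    HasDerivAt (jacobiSum x y n)
      (∑ p ∈ antidiagonal n, Ring.choose y p.1 * Ring.choose x p.2 *
        ((p.1 * ((t - 1) / 2) ^ (p.1 - 1) * ((t + 1) / 2) ^ p.2 +
          p.2 * (((t - 1) / 2) ^ p.1 * ((t + 1) / 2) ^ (p.2 - 1))) / 2)) t :=
  HasDerivAt.fun_sum fun p _ => (hasDerivAt_pow_mul_pow p.1 p.2 t).const_mul _

theorem deriv_jacobiSum_succ (x y : ℝ) (n : ℕ) (t : ℝ) :
    deriv (jacobiSum x y (n + 1)) t = (x + y - n) / 2 * jacobiSum x y n t := by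
  simp only [(hasDerivAt_jacobiSum x y (n + 1) t).deriv, add_div, mul_add, sum_add_distrib]
  rw [Nat.sum_antidiagonal_succ, Nat.sum_antidiagonal_succ', jacobiSum, mul_sum]
  simp only [Nat.cast_zero, zero_mul, zero_div, mul_zero, zero_add, ← sum_add_distrib,
    Nat.add_sub_cancel]
  refine sum_congr rfl fun p hp => ?_
  have hn : (p.1 + p.2 : ℝ) = n := by exact_mod_cast mem_antidiagonal.1 hp
  push_cast
  linear_combination ((t - 1) / 2) ^ p.1 * ((t + 1) / 2) ^ p.2 / 2 *
    (Ring.choose x p.2 * choose_succ_mul y p.1 + Ring.choose y p.1 * choose_succ_mul x p.2 -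
      Ring.choose y p.1 * Ring.choose x p.2 * hn)

theorem natCast_mul_pow_pred (n : ℕ) (t : ℝ) : t * (n * t ^ (n - 1)) = n * t ^ n := by
  rcases n with _ | n
  · simp
  · rw [Nat.add_sub_cancel, pow_succ]; ring

theorem jacobiSum_succ_eq_deriv (x y : ℝ) (n : ℕ) (t : ℝ) :
    (n + 1) * jacobiSum x y (n + 1) t =
      (t ^ 2 - 1) / 2 * deriv (jacobiSum x y n) t +
        ((x - n) * ((t + 1) / 2) + (y - n) * ((t - 1) / 2)) * jacobiSum x y n t := by
  set A := (t - 1) / 2 with hA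
  set B := (t + 1) / 2 with hB
  have hsplit : (n + 1) * jacobiSum x y (n + 1) t =
      ∑ p ∈ antidiagonal (n + 1),
          p.1 * (Ring.choose y p.1 * Ring.choose x p.2 * (A ^ p.1 * B ^ p.2)) +
        ∑ p ∈ antidiagonal (n + 1),
          p.2 * (Ring.choose y p.1 * Ring.choose x p.2 * (A ^ p.1 * B ^ p.2)) := by
    rw [jacobiSum, mul_sum, ← sum_add_distrib]
    refine sum_congr rfl fun p hp => ?_
    have hn : (p.1 + p.2 : ℝ) = n + 1 := by exact_mod_cast mem_antidiagonal.1 hp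
    rw [← hn, add_mul]
  rw [hsplit, Nat.sum_antidiagonal_succ, Nat.sum_antidiagonal_succ',
    (hasDerivAt_jacobiSum x y n t).deriv, jacobiSum, mul_sum, mul_sum, ← sum_add_distrib]
  simp only [Nat.cast_zero, zero_mul, zero_add, ← sum_add_distrib]
  refine sum_congr rfl fun p hp => ?_
  have hn : (p.1 + p.2 : ℝ) = n := by exact_mod_cast mem_antidiagonal.1 hp
  have hAB : (t ^ 2 - 1) / 2 = 2 * (A * B) := by rw [hA, hB]; ring
  rw [hAB, ← hA, ← hB]
  push_cast
  linear_combination A ^ p.1 * B ^ p.2 *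
      (A * Ring.choose x p.2 * choose_succ_mul y p.1 +
        B * Ring.choose y p.1 * choose_succ_mul x p.2)
    - Ring.choose y p.1 * Ring.choose x p.2 *
      (B * B ^ p.2 * natCast_mul_pow_pred p.1 A + A * A ^ p.1 * natCast_mul_pow_pred p.2 B
        + (A + B) * A ^ p.1 * B ^ p.2 * hn)

/-! ### Liouville normal form -/

theorem sin_half_pos {θ : ℝ} (hθ : θ ∈ Ioo 0 π) : 0 < sin (θ / 2) :=
  sin_pos_of_pos_of_lt_pi (by linarith [hθ.1]) (by linarith [hθ.1, hθ.2])

theorem cos_half_pos {θ : ℝ} (hθ : θ ∈ Ioo 0 π) : 0 < cos (θ / 2) :=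
  cos_pos_of_mem_Ioo ⟨by linarith [hθ.1, pi_pos], by linarith [hθ.2]⟩

theorem hasDerivAt_sin_half (θ : ℝ) : HasDerivAt (fun t => sin (t / 2)) (cos (θ / 2) / 2) θ :=
  ((hasDerivAt_id θ).div_const 2).sin.congr_deriv (by simp only [id]; ring)

theorem hasDerivAt_cos_half (θ : ℝ) : HasDerivAt (fun t => cos (t / 2)) (-sin (θ / 2) / 2) θ :=
  ((hasDerivAt_id θ).div_const 2).cos.congr_deriv (by simp only [id]; ring)

theorem sin_eq_two_mul_half (θ : ℝ) : sin θ = 2 * sin (θ / 2) * cos (θ / 2) := by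
  rw [← sin_two_mul, mul_div_cancel₀ θ two_ne_zero]

theorem cos_eq_sq_sub_sq_half (θ : ℝ) : cos θ = cos (θ / 2) ^ 2 - sin (θ / 2) ^ 2 := by
  rw [← cos_two_mul', mul_div_cancel₀ θ two_ne_zero]

/-- The weight `sin(θ/2)^p cos(θ/2)^q` on `(0, π)`, which carries the Jacobi weight and its square
root to the variable `θ`. -/
noncomputable def halfWeight (p q θ : ℝ) : ℝ := sin (θ / 2) ^ p * cos (θ / 2) ^ q

/-- `(p/2) cot(θ/2) - (q/2) tan(θ/2)`, the logarithmic derivative of `halfWeight p q`. -/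
noncomputable def halfCotTan (p q θ : ℝ) : ℝ :=
  p / 2 * (cos (θ / 2) / sin (θ / 2)) - q / 2 * (sin (θ / 2) / cos (θ / 2))

/-- The Pöschl–Teller potential `p csc²(θ/2) + q sec²(θ/2)`. -/
noncomputable def cscSecSq (p q θ : ℝ) : ℝ := p / sin (θ / 2) ^ 2 + q / cos (θ / 2) ^ 2

theorem halfWeight_pos (p q : ℝ) {θ : ℝ} (hθ : θ ∈ Ioo 0 π) : 0 < halfWeight p q θ :=
  mul_pos (rpow_pos_of_pos (sin_half_pos hθ) p) (rpow_pos_of_pos (cos_half_pos hθ) q)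

theorem halfWeight_add (p q r s : ℝ) {θ : ℝ} (hθ : θ ∈ Ioo 0 π) :
    halfWeight (p + r) (q + s) θ = halfWeight p q θ * halfWeight r s θ := by
  simp only [halfWeight, rpow_add (sin_half_pos hθ), rpow_add (cos_half_pos hθ)]
  ring

theorem halfWeight_one_one (θ : ℝ) : halfWeight 1 1 θ = sin θ / 2 := by
  rw [halfWeight, rpow_one, rpow_one, sin_eq_two_mul_half θ]
  ring

theorem hasDerivAt_halfWeight (p q : ℝ) {θ : ℝ} (hθ : θ ∈ Ioo 0 π) :
    HasDerivAt (halfWeight p q) (halfCotTan p q θ * halfWeight p q θ) θ := by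
  have hs := sin_half_pos hθ
  have hc := cos_half_pos hθ
  refine (((hasDerivAt_sin_half θ).rpow_const (p := p) (.inl hs.ne')).mul
    ((hasDerivAt_cos_half θ).rpow_const (p := q) (.inl hc.ne'))).congr_deriv ?_
  rw [rpow_sub_one hs.ne', rpow_sub_one hc.ne', halfCotTan, halfWeight]
  field_simp
  ring

theorem hasDerivAt_halfCotTan (p q : ℝ) {θ : ℝ} (hθ : θ ∈ Ioo 0 π) :
    HasDerivAt (halfCotTan p q) (-cscSecSq (p / 4) (q / 4) θ) θ := by
  have hs := (sin_half_pos hθ).ne'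
  have hc := (cos_half_pos hθ).ne'
  refine ((((hasDerivAt_cos_half θ).div (hasDerivAt_sin_half θ) hs).const_mul (p / 2)).sub
    (((hasDerivAt_sin_half θ).div (hasDerivAt_cos_half θ) hc).const_mul (q / 2))).congr_deriv ?_
  rw [cscSecSq]
  field_simp
  linear_combination
    (-4 * p * cos (θ / 2) ^ 2 - 4 * q * sin (θ / 2) ^ 2) * sin_sq_add_cos_sq (θ / 2)

theorem hasDerivAt_cscSecSq (p q : ℝ) {θ : ℝ} (hθ : θ ∈ Ioo 0 π) :
    HasDerivAt (cscSecSq p q)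
      (-p * (cos (θ / 2) / sin (θ / 2) ^ 3) + q * (sin (θ / 2) / cos (θ / 2) ^ 3)) θ := by
  have hs := (sin_half_pos hθ).ne'
  have hc := (cos_half_pos hθ).ne'
  refine (((hasDerivAt_const θ p).div ((hasDerivAt_sin_half θ).fun_pow 2) (pow_ne_zero 2 hs)).add
    ((hasDerivAt_const θ q).div ((hasDerivAt_cos_half θ).fun_pow 2)
      (pow_ne_zero 2 hc))).congr_deriv ?_
  field_simp
  ring

theorem halfCotTan_sq (p q : ℝ) {θ : ℝ} (hθ : θ ∈ Ioo 0 π) :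
    halfCotTan p q θ ^ 2 = cscSecSq (p ^ 2 / 4) (q ^ 2 / 4) θ - (p + q) ^ 2 / 4 := by
  have hs := (sin_half_pos hθ).ne'
  have hc := (cos_half_pos hθ).ne'
  rw [halfCotTan, cscSecSq]
  field_simp
  linear_combination
    4 * (p ^ 2 * cos (θ / 2) ^ 2 + q ^ 2 * sin (θ / 2) ^ 2) * sin_sq_add_cos_sq (θ / 2)

theorem halfCotTan_mul_sin (p q : ℝ) {θ : ℝ} (hθ : θ ∈ Ioo 0 π) :
    halfCotTan p q θ * sin θ = p * ((cos θ + 1) / 2) + q * ((cos θ - 1) / 2) := by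
  have hs := (sin_half_pos hθ).ne'
  have hc := (cos_half_pos hθ).ne'
  rw [halfCotTan, sin_eq_two_mul_half θ, cos_eq_sq_sub_sq_half θ]
  field_simp
  linear_combination (p - q) * sin_sq_add_cos_sq (θ / 2)

/-- The Liouville normal form `sin(θ/2)^(a+1/2) cos(θ/2)^(b+1/2) P_n^{(a,b)}(cos θ)`, in which the
Jacobi differential equation has no first-order term. -/
noncomputable def jacobiLiouville (a b : ℝ) (n : ℕ) (θ : ℝ) : ℝ :=
  halfWeight (a + 1 / 2) (b + 1 / 2) θ * jacobiSum (n + a) (n + b) n (cos θ)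

theorem hasDerivAt_jacobiLiouville (a b : ℝ) (n : ℕ) {θ : ℝ} (hθ : θ ∈ Ioo 0 π) :
    HasDerivAt (jacobiLiouville a b n)
      (halfCotTan (a + 1 / 2) (b + 1 / 2) θ * jacobiLiouville a b n θ -
        halfWeight (a + 1 / 2) (b + 1 / 2) θ * sin θ *
          deriv (jacobiSum (n + a) (n + b) n) (cos θ)) θ := by
  have hP := ((hasDerivAt_jacobiSum (n + a) (n + b) n
    (cos θ)).differentiableAt.hasDerivAt.comp θ (hasDerivAt_cos θ))
  refine ((hasDerivAt_halfWeight _ _ hθ).mul hP).congr_deriv ?_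
  simp only [Function.comp_apply, jacobiLiouville]
  ring

theorem halfWeight_succ (a b : ℝ) {θ : ℝ} (hθ : θ ∈ Ioo 0 π) :
    halfWeight (a + 1 + 1 / 2) (b + 1 + 1 / 2) θ =
      halfWeight (a + 1 / 2) (b + 1 / 2) θ * (sin θ / 2) := by
  rw [← halfWeight_one_one, ← halfWeight_add _ _ _ _ hθ]
  ring_nf

theorem hasDerivAt_jacobiLiouville_succ (a b : ℝ) (n : ℕ) {θ : ℝ} (hθ : θ ∈ Ioo 0 π) :
    HasDerivAt (jacobiLiouville a b (n + 1))
      (halfCotTan (a + 1 / 2) (b + 1 / 2) θ * jacobiLiouville a b (n + 1) θ -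
        (n + a + b + 2) * jacobiLiouville (a + 1) (b + 1) n θ) θ := by
  refine (hasDerivAt_jacobiLiouville a b (n + 1) hθ).congr_deriv ?_
  rw [deriv_jacobiSum_succ, jacobiLiouville, jacobiLiouville, halfWeight_succ a b hθ,
    show (n + (a + 1) : ℝ) = (n + 1 : ℕ) + a by push_cast; ring,
    show (n + (b + 1) : ℝ) = (n + 1 : ℕ) + b by push_cast; ring]
  push_cast
  ring

theorem hasDerivAt_jacobiLiouville_add_one (a b : ℝ) (n : ℕ) {θ : ℝ} (hθ : θ ∈ Ioo 0 π) :
    HasDerivAt (jacobiLiouville (a + 1) (b + 1) n)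
      ((n + 1) * jacobiLiouville a b (n + 1) θ -
        halfCotTan (a + 1 / 2) (b + 1 / 2) θ * jacobiLiouville (a + 1) (b + 1) n θ) θ := by
  refine (hasDerivAt_jacobiLiouville (a + 1) (b + 1) n hθ).congr_deriv ?_
  have hrec := jacobiSum_succ_eq_deriv (n + (a + 1)) (n + (b + 1)) n (cos θ)
  have hh := halfCotTan_mul_sin (a + 1 / 2) (b + 1 / 2) hθ
  have hh' := halfCotTan_mul_sin (a + 1 + 1 / 2) (b + 1 + 1 / 2) hθ
  simp only [jacobiLiouville, halfWeight_succ a b hθ, Nat.cast_add_one,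
    show (n + 1 + a : ℝ) = n + (a + 1) by ring, show (n + 1 + b : ℝ) = n + (b + 1) by ring]
  generalize deriv (jacobiSum _ _ _) _ = D at hrec ⊢
  generalize jacobiSum _ _ (n + 1) _ = P at hrec ⊢
  generalize jacobiSum _ _ n _ = S at hrec ⊢
  linear_combination halfWeight (a + 1 / 2) (b + 1 / 2) θ *
    (S / 2 * (hh + hh') - hrec - D / 2 * sin_sq_add_cos_sq θ)

/-- The frequency `ℓ̃ = n + (a + b + 1) / 2` of the oscillations of `jacobiLiouville a b n`. -/
noncomputable def shiftedDegree (a b : ℝ) (n : ℕ) : ℝ := n + (a + b + 1) / 2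

/-- The potential `V` in the Liouville normal form `u'' + (ℓ̃² + V) u = 0` of the Jacobi
differential equation. -/
noncomputable def jacobiPotential (a b : ℝ) : ℝ → ℝ :=
  cscSecSq ((1 / 4 - a ^ 2) / 4) ((1 / 4 - b ^ 2) / 4)

theorem hasDerivAt_deriv_jacobiLiouville (a b : ℝ) (n : ℕ) {θ : ℝ} (hθ : θ ∈ Ioo 0 π) :
    HasDerivAt (deriv (jacobiLiouville a b (n + 1)))
      (-(shiftedDegree a b (n + 1) ^ 2 + jacobiPotential a b θ) *
        jacobiLiouville a b (n + 1) θ) θ := by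
  have hderiv : deriv (jacobiLiouville a b (n + 1)) =ᶠ[𝓝 θ] fun θ =>
      halfCotTan (a + 1 / 2) (b + 1 / 2) θ * jacobiLiouville a b (n + 1) θ -
        (n + a + b + 2) * jacobiLiouville (a + 1) (b + 1) n θ := by
    filter_upwards [isOpen_Ioo.mem_nhds hθ] with t ht
      using (hasDerivAt_jacobiLiouville_succ a b n ht).deriv
  refine HasDerivAt.congr_of_eventuallyEq (HasDerivAt.congr_deriv
    (((hasDerivAt_halfCotTan _ _ hθ).mul (hasDerivAt_jacobiLiouville_succ a b n hθ)).sub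
      ((hasDerivAt_jacobiLiouville_add_one a b n hθ).const_mul _)) ?_) hderiv
  have hsq := halfCotTan_sq (a + 1 / 2) (b + 1 / 2) hθ
  simp only [jacobiPotential, shiftedDegree, cscSecSq, Nat.cast_add_one] at hsq ⊢
  linear_combination jacobiLiouville a b (n + 1) θ * hsq

/-! ### WKB approximation and energy comparison -/

/-- The two-term WKB approximation with phase shift `δ`, amplitude correction `F` and constant
correction `κ` to a solution of `u'' + (N² + V) u = 0`, where `F' = -V / 2`. -/
noncomputable def wkbApprox (F : ℝ → ℝ) (κ δ N θ : ℝ) : ℝ :=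
  cos (N * θ - δ) + N⁻¹ * (F θ * sin (N * θ - δ) - κ * cos (N * θ - δ))

/-- The derivative of `wkbApprox F κ δ N` when `F' = -V / 2`. -/
noncomputable def wkbDeriv (F V : ℝ → ℝ) (κ δ N θ : ℝ) : ℝ :=
  -N * sin (N * θ - δ) + F θ * cos (N * θ - δ) + κ * sin (N * θ - δ) -
    N⁻¹ * (V θ / 2 * sin (N * θ - δ))

theorem hasDerivAt_mul_sub (N δ θ : ℝ) : HasDerivAt (fun t => N * t - δ) N θ := by
  simpa using ((hasDerivAt_id θ).const_mul N).sub_const δ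

theorem hasDerivAt_wkbApprox {F V : ℝ → ℝ} {N θ : ℝ} (κ δ : ℝ) (hN : N ≠ 0)
    (hF : HasDerivAt F (-(V θ / 2)) θ) :
    HasDerivAt (wkbApprox F κ δ N) (wkbDeriv F V κ δ N θ) θ := by
  have hsin := (hasDerivAt_mul_sub N δ θ).sin
  have hcos := (hasDerivAt_mul_sub N δ θ).cos
  refine (hcos.add (((hF.mul hsin).sub (hcos.const_mul κ)).const_mul N⁻¹)).congr_deriv ?_
  rw [wkbDeriv]
  field_simp
  ring

theorem hasDerivAt_wkbDeriv {F V : ℝ → ℝ} {V' N θ : ℝ} (κ δ : ℝ) (hN : N ≠ 0)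
    (hF : HasDerivAt F (-(V θ / 2)) θ) (hV : HasDerivAt V V' θ) :
    HasDerivAt (wkbDeriv F V κ δ N)
      (-(N ^ 2 + V θ) * wkbApprox F κ δ N θ + N⁻¹ *
        ((V θ * F θ - V' / 2) * sin (N * θ - δ) - V θ * κ * cos (N * θ - δ))) θ := by
  have hsin := (hasDerivAt_mul_sub N δ θ).sin
  have hcos := (hasDerivAt_mul_sub N δ θ).cos
  refine ((((hsin.const_mul (-N)).add (hF.mul hcos)).add (hsin.const_mul κ)).sub
    (((hV.div_const 2).mul hsin).const_mul N⁻¹)).congr_deriv ?_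
  rw [wkbApprox]
  field_simp
  ring

theorem exists_inv_sin_half_le_inv_cos_half_le {ε : ℝ} (hε : 0 < ε) :
    ∃ K, 0 < K ∧ ∀ t ∈ Ioc 0 (π - ε), (sin (t / 2))⁻¹ ≤ K / t ∧ (cos (t / 2))⁻¹ ≤ K / t := by
  refine ⟨π + π ^ 2 / ε, by positivity, fun t ht => ?_⟩
  have ht0 : 0 < t := ht.1
  have hπ := pi_pos
  have hsin : t / π ≤ sin (t / 2) := by
    have := mul_le_sin (x := t / 2) (by linarith) (by linarith [ht.2])
    calc t / π = 2 / π * (t / 2) := by ring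
      _ ≤ _ := this
  have hcos : ε / π ≤ cos (t / 2) := by
    have := mul_le_sin (x := (π - t) / 2) (by linarith [ht.2]) (by linarith)
    rw [show (π - t) / 2 = π / 2 - t / 2 by ring, sin_pi_div_two_sub] at this
    refine le_trans ?_ this
    rw [show 2 / π * (π / 2 - t / 2) = (π - t) / π by ring]
    gcongr
    linarith [ht.2]
  constructor
  · calc (sin (t / 2))⁻¹ ≤ (t / π)⁻¹ := by gcongr
      _ = π / t := inv_div t π
      _ ≤ _ := by gcongr; exact le_add_of_nonneg_right (by positivity)
  · calc (cos (t / 2))⁻¹ ≤ (ε / π)⁻¹ := by gcongr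
      _ = π * t / ε / t := by field_simp
      _ ≤ π * π / ε / t := by gcongr; linarith [ht.2]
      _ ≤ (π + π ^ 2 / ε) / t := by gcongr; rw [← sq]; exact le_add_of_nonneg_left hπ.le

theorem abs_mul_add_mul_le {p q x y r : ℝ} (hx : |x| ≤ r) (hy : |y| ≤ r) :
    |p * x + q * y| ≤ (|p| + |q|) * r := by
  calc |p * x + q * y| ≤ |p| * |x| + |q| * |y| := by
        rw [← abs_mul, ← abs_mul]; exact abs_add_le _ _
    _ ≤ |p| * r + |q| * r := by gcongr
    _ = (|p| + |q|) * r := by ring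

theorem abs_div_pow_le_of_inv_le {x y r : ℝ} (n : ℕ) (hx : |x| ≤ 1) (hy : 0 < y) (hr : y⁻¹ ≤ r) :
    |x / y ^ n| ≤ r ^ n := by
  rw [abs_div, abs_of_pos (pow_pos hy n), div_eq_mul_inv, ← inv_pow]
  calc |x| * y⁻¹ ^ n ≤ 1 * r ^ n := by gcongr
    _ = r ^ n := one_mul _

theorem abs_halfCotTan_le (p q : ℝ) {r θ : ℝ} (hθ : θ ∈ Ioo 0 π) (hs : (sin (θ / 2))⁻¹ ≤ r)
    (hc : (cos (θ / 2))⁻¹ ≤ r) : |halfCotTan p q θ| ≤ (|p| + |q|) / 2 * r := by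
  have h := abs_mul_add_mul_le (p := p / 2) (q := -(q / 2))
    (abs_div_pow_le_of_inv_le 1 (abs_cos_le_one (θ / 2)) (sin_half_pos hθ) hs)
    (abs_div_pow_le_of_inv_le 1 (abs_sin_le_one (θ / 2)) (cos_half_pos hθ) hc)
  simpa only [halfCotTan, abs_neg, abs_div, abs_two, ← add_div, neg_mul, ← sub_eq_add_neg,
    pow_one] using h

theorem abs_cscSecSq_le (p q : ℝ) {r θ : ℝ} (hθ : θ ∈ Ioo 0 π) (hs : (sin (θ / 2))⁻¹ ≤ r)
    (hc : (cos (θ / 2))⁻¹ ≤ r) : |cscSecSq p q θ| ≤ (|p| + |q|) * r ^ 2 := by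
  have h := abs_mul_add_mul_le (p := p) (q := q)
    (abs_div_pow_le_of_inv_le 2 abs_one.le (sin_half_pos hθ) hs)
    (abs_div_pow_le_of_inv_le 2 abs_one.le (cos_half_pos hθ) hc)
  simpa only [cscSecSq, mul_one_div] using h

theorem abs_deriv_cscSecSq_le (p q : ℝ) {r θ : ℝ} (hθ : θ ∈ Ioo 0 π) (hs : (sin (θ / 2))⁻¹ ≤ r)
    (hc : (cos (θ / 2))⁻¹ ≤ r) : |deriv (cscSecSq p q) θ| ≤ (|p| + |q|) * r ^ 3 := by
  rw [(hasDerivAt_cscSecSq p q hθ).deriv, ← abs_neg p]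
  exact abs_mul_add_mul_le
    (abs_div_pow_le_of_inv_le 3 (abs_cos_le_one _) (sin_half_pos hθ) hs)
    (abs_div_pow_le_of_inv_le 3 (abs_sin_le_one _) (cos_half_pos hθ) hc)

theorem exists_wkb_residual_bound (p q κ : ℝ) {ε : ℝ} (hε : 0 < ε) :
    ∃ K, 0 < K ∧ ∀ t ∈ Ioc 0 (π - ε), |cscSecSq p q t| ≤ K / t ^ 2 ∧ ∀ x,
      |(cscSecSq p q t * halfCotTan (2 * p) (2 * q) t - deriv (cscSecSq p q) t / 2) * sin x -
        cscSecSq p q t * κ * cos x| ≤ K / t ^ 3 := by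
  obtain ⟨K, hK, hinv⟩ := exists_inv_sin_half_le_inv_cos_half_le hε
  set m := |p| + |q| with hm
  refine ⟨m * K ^ 2 + (m ^ 2 + m) * K ^ 3 + m * |κ| * K ^ 2 * π + 1, by positivity,
    fun t ht => ?_⟩
  have ht0 : 0 < t := ht.1
  have htπ : t ∈ Ioo 0 π := ⟨ht0, by linarith [ht.2]⟩
  obtain ⟨hs, hc⟩ := hinv t ht
  have hF := abs_halfCotTan_le (2 * p) (2 * q) htπ hs hc
  have hV := abs_cscSecSq_le p q htπ hs hc
  have hV' := abs_deriv_cscSecSq_le p q htπ hs hc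
  rw [abs_mul, abs_mul, abs_two, ← mul_add, mul_div_cancel_left₀ _ two_ne_zero, ← hm] at hF
  rw [← hm] at hV hV'
  generalize halfCotTan (2 * p) (2 * q) t = F at hF ⊢
  generalize deriv (cscSecSq p q) t = V' at hV' ⊢
  generalize cscSecSq p q t = V at hV ⊢
  constructor
  · calc |V| ≤ m * (K / t) ^ 2 := hV
      _ = m * K ^ 2 / t ^ 2 := by rw [div_pow]; ring
      _ ≤ _ := by gcongr; exact le_add_of_le_of_nonneg (le_add_of_le_of_nonneg
          (le_add_of_nonneg_right (by positivity)) (by positivity)) zero_le_one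
  · intro x
    have hsx := abs_sin_le_one x
    have hcx := abs_cos_le_one x
    calc |(V * F - V' / 2) * sin x - V * κ * cos x|
        ≤ |V * F - V' / 2| * |sin x| + |V| * |κ| * |cos x| := by
          rw [← abs_mul, ← abs_mul, ← abs_mul]; exact abs_sub _ _
      _ ≤ (|V| * |F| + |V'| / 2) * 1 + |V| * |κ| * 1 := by
          gcongr
          calc |V * F - V' / 2| ≤ |V * F| + |V' / 2| := abs_sub _ _
            _ = _ := by rw [abs_mul, abs_div, abs_two]
      _ ≤ (m * (K / t) ^ 2 * (m * (K / t)) + m * (K / t) ^ 3) * 1 +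
          m * (K / t) ^ 2 * |κ| * 1 := by
          gcongr
          linarith [abs_nonneg V']
      _ = ((m ^ 2 + m) * K ^ 3 + m * |κ| * K ^ 2 * t) / t ^ 3 := by field_simp
      _ ≤ (m * K ^ 2 + (m ^ 2 + m) * K ^ 3 + m * |κ| * K ^ 2 * π + 1) / t ^ 3 := by
          have : m * |κ| * K ^ 2 * t ≤ m * |κ| * K ^ 2 * π := by gcongr; exact htπ.2.le
          gcongr ?_ / _
          linarith [show 0 ≤ m * K ^ 2 by positivity]

theorem le_exp_abs_sub_mul_of_abs_deriv_le {f f' A A' : ℝ → ℝ} {x y : ℝ}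
    (hf : ∀ t ∈ uIcc x y, HasDerivAt f (f' t) t) (hA : ∀ t ∈ uIcc x y, HasDerivAt A (A' t) t)
    (hf' : ∀ t ∈ uIcc x y, |f' t| ≤ A' t * f t) (hy : 0 ≤ f y) :
    f x ≤ exp |A x - A y| * f y := by
  rcases le_total x y with hxy | hyx
  · have hmono : MonotoneOn (fun t => exp (A t) * f t) (uIcc x y) := by
      have hd (t) (ht : t ∈ uIcc x y) := (hA t ht).exp.mul (hf t ht)
      refine monotoneOn_of_hasDerivWithinAt_nonneg (convex_uIcc x y)
        (fun t ht => (hd t ht).continuousAt.continuousWithinAt)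
        (fun t ht => (hd t (interior_subset ht)).hasDerivWithinAt) fun t ht => ?_
      have := neg_le_of_abs_le (hf' t (interior_subset ht))
      nlinarith [exp_pos (A t)]
    calc f x = exp (-A x) * (exp (A x) * f x) := by rw [← mul_assoc, ← exp_add]; simp
      _ ≤ exp (-A x) * (exp (A y) * f y) :=
        mul_le_mul_of_nonneg_left (hmono left_mem_uIcc right_mem_uIcc hxy) (exp_pos _).le
      _ = exp (-(A x - A y)) * f y := by rw [← mul_assoc, ← exp_add]; ring_nf
      _ ≤ exp |A x - A y| * f y := by gcongr; exact neg_le_abs _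
  · have hanti : AntitoneOn (fun t => exp (-A t) * f t) (uIcc x y) := by
      have hd (t) (ht : t ∈ uIcc x y) := (hA t ht).fun_neg.exp.mul (hf t ht)
      refine antitoneOn_of_hasDerivWithinAt_nonpos (convex_uIcc x y)
        (fun t ht => (hd t ht).continuousAt.continuousWithinAt)
        (fun t ht => (hd t (interior_subset ht)).hasDerivWithinAt) fun t ht => ?_
      have := le_of_abs_le (hf' t (interior_subset ht))
      nlinarith [exp_pos (-A t)]
    calc f x = exp (A x) * (exp (-A x) * f x) := by rw [← mul_assoc, ← exp_add]; simp
      _ ≤ exp (A x) * (exp (-A y) * f y) :=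
        mul_le_mul_of_nonneg_left (hanti right_mem_uIcc left_mem_uIcc hyx) (exp_pos _).le
      _ = exp (A x - A y) * f y := by rw [← mul_assoc, ← exp_add]; ring_nf
      _ ≤ exp |A x - A y| * f y := by gcongr; exact le_abs_self _

theorem two_mul_abs_mul_le_energy {N K θ t w v r : ℝ} (hN : 0 < N) (hK : 0 ≤ K) (hθ : 0 < θ)
    (ht : 0 < t) (hr : |r| ≤ K / t ^ 2 * |w| + K / (N * t ^ 3)) :
    |2 * v * r| ≤ (K / (N * t ^ 2) + K * θ ^ 2 / t ^ 3) *
      (N ^ 2 * w ^ 2 + v ^ 2 + 1 / (N ^ 2 * θ ^ 4)) := by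
  set E := N ^ 2 * w ^ 2 + v ^ 2 + 1 / (N ^ 2 * θ ^ 4) with hE
  have hvw : 2 * |v| * |w| ≤ E / N := by
    rw [le_div_iff₀ hN, hE, ← sq_abs w, ← sq_abs v]
    nlinarith [sq_nonneg (N * |w| - |v|), show 0 ≤ 1 / (N ^ 2 * θ ^ 4) by positivity]
  have hv : 2 * |v| / N ≤ θ ^ 2 * E := by
    have hsq : θ ^ 2 * E =
        (θ * |v| - 1 / (N * θ)) ^ 2 + 2 * |v| / N + θ ^ 2 * (N ^ 2 * w ^ 2) := by
      rw [hE, ← sq_abs v]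
      field_simp
      ring
    rw [hsq]
    linarith [sq_nonneg (θ * |v| - 1 / (N * θ)), show 0 ≤ θ ^ 2 * (N ^ 2 * w ^ 2) by positivity]
  rw [abs_mul, abs_mul, abs_two]
  calc 2 * |v| * |r| ≤ 2 * |v| * (K / t ^ 2 * |w| + K / (N * t ^ 3)) := by gcongr
    _ = K / t ^ 2 * (2 * |v| * |w|) + K / t ^ 3 * (2 * |v| / N) := by field_simp
    _ ≤ K / t ^ 2 * (E / N) + K / t ^ 3 * (θ ^ 2 * E) := by gcongr
    _ = (K / (N * t ^ 2) + K * θ ^ 2 / t ^ 3) * E := by field_simp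

/- The constant `1 / (N² θ⁴)` added to the energy absorbs the inhomogeneous part of the equation, so
that the energy inequality becomes homogeneous. -/
theorem energy_le_exp_mul_energy {w v g : ℝ → ℝ} {N K c θ t₀ : ℝ} (hN : 0 < N) (hK : 0 ≤ K)
    (hc : 0 < c) (hθ : 0 < θ) (hNθ : c ≤ N * θ) (hθt₀ : θ ≤ 2 * t₀)
    (hw : ∀ t ∈ uIcc θ t₀, HasDerivAt w (v t) t) (hv : ∀ t ∈ uIcc θ t₀, HasDerivAt v (g t) t)
    (hg : ∀ t ∈ uIcc θ t₀, |g t + N ^ 2 * w t| ≤ K / t ^ 2 * |w t| + K / (N * t ^ 3)) :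
    N ^ 2 * w θ ^ 2 + v θ ^ 2 + 1 / (N ^ 2 * θ ^ 4) ≤ exp (2 * K * (1 + 1 / c)) *
      (N ^ 2 * w t₀ ^ 2 + v t₀ ^ 2 + 1 / (N ^ 2 * θ ^ 4)) := by
  have ht₀ : 0 < t₀ := by linarith
  have hpos (t) (ht : t ∈ uIcc θ t₀) : 0 < t := lt_of_lt_of_le (lt_min hθ ht₀) ht.1
  set B : ℝ → ℝ := fun t => K / N * t⁻¹ + K * θ ^ 2 / 2 * (t ^ 2)⁻¹ with hB
  have hBnonneg (t) (ht : 0 < t) : 0 ≤ B t := by positivity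
  have hBle (t) (ht : 0 < t) (hθt : θ ≤ 2 * t) : B t ≤ 2 * K * (1 + 1 / c) := by
    calc B t = K * (1 / (N * t)) + K / 2 * (θ / t) ^ 2 := by simp only [hB]; field_simp
      _ ≤ K * (2 / c) + K / 2 * 2 ^ 2 := by
        gcongr K * ?_ + K / 2 * ?_ ^ 2
        · rw [div_le_div_iff₀ (by positivity) hc]
          nlinarith
        · rwa [div_le_iff₀ ht]
      _ = _ := by ring
  have hBderiv (t) (ht : t ∈ uIcc θ t₀) :
      HasDerivAt (fun t => -B t) (K / (N * t ^ 2) + K * θ ^ 2 / t ^ 3) t := by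
    have h0 := (hpos t ht).ne'
    refine (((hasDerivAt_inv h0).const_mul (K / N)).add
      (((hasDerivAt_pow 2 t).inv (pow_ne_zero 2 h0)).const_mul
        (K * θ ^ 2 / 2))).neg.congr_deriv ?_
    field_simp
    push_cast
    ring
  have hE (t) (ht : t ∈ uIcc θ t₀) :
      HasDerivAt (fun t => N ^ 2 * w t ^ 2 + v t ^ 2 + 1 / (N ^ 2 * θ ^ 4))
        (2 * v t * (g t + N ^ 2 * w t)) t :=
    ((((hw t ht).fun_pow 2).const_mul (N ^ 2)).add ((hv t ht).fun_pow 2)).add_const _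
      |>.congr_deriv (by push_cast; ring)
  refine (le_exp_abs_sub_mul_of_abs_deriv_le hE hBderiv (fun t ht =>
    two_mul_abs_mul_le_energy hN hK hθ (hpos t ht) (hg t ht)) (by positivity)).trans ?_
  gcongr
  rw [neg_sub_neg]
  exact abs_sub_le_of_nonneg_of_le (hBnonneg t₀ ht₀) (hBle t₀ ht₀ hθt₀) (hBnonneg θ hθ)
    (hBle θ hθ (by linarith))

/-! ### Cauchy's formula for the value at zero -/

theorem hasSum_choose_mul_pow (x : ℝ) {z : ℂ} (hz : ‖z‖ < 1) :
    HasSum (fun k : ℕ => ((Ring.choose x k : ℝ) : ℂ) * z ^ k) ((1 + z) ^ (x : ℂ)) ∧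
      Summable fun k : ℕ => ‖((Ring.choose x k : ℝ) : ℂ) * z ^ k‖ := by
  have hseries := Complex.one_add_cpow_hasFPowerSeriesOnBall_zero (a := (x : ℂ))
  have hz' : z ∈ Metric.eball (0 : ℂ) 1 := by
    rw [← ENNReal.ofReal_one, Metric.eball_ofReal]
    simpa using hz
  have hterm (k : ℕ) :
      (binomialSeries ℂ (x : ℂ) k fun _ => z) = ((Ring.choose x k : ℝ) : ℂ) * z ^ k := by
    have hchoose : Ring.choose (x : ℂ) k = ((Ring.choose x k : ℝ) : ℂ) :=
      (Ring.map_choose Complex.ofRealHom x k).symm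
    rw [binomialSeries_apply, hchoose]
    simp
  constructor
  · simpa [hterm] using hseries.hasSum hz'
  · simpa only [hterm] using (binomialSeries ℂ (x : ℂ)).summable_norm_apply
      (Metric.eball_subset_eball hseries.r_le hz')

theorem hasSum_jacobiSum_mul_pow (x y : ℝ) {t : ℝ} (ht : |t| ≤ 1) {z : ℂ} (hz : ‖z‖ < 1) :
    HasSum (fun n => (jacobiSum x y n t : ℂ) * z ^ n)
      ((1 + ((t - 1) / 2 : ℝ) * z) ^ (y : ℂ) * (1 + ((t + 1) / 2 : ℝ) * z) ^ (x : ℂ)) := by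
  have hlt {s : ℝ} (hs : |s| ≤ 1) : ‖(s : ℂ) * z‖ < 1 := by
    rw [norm_mul, Complex.norm_real, norm_eq_abs]
    exact (mul_le_of_le_one_left (norm_nonneg z) hs).trans_lt hz
  obtain ⟨ht₁, ht₂⟩ := abs_le.1 ht
  obtain ⟨hy, hy'⟩ := hasSum_choose_mul_pow y
    (hlt (s := (t - 1) / 2) (abs_le.2 ⟨by linarith, by linarith⟩))
  obtain ⟨hx, hx'⟩ := hasSum_choose_mul_pow x
    (hlt (s := (t + 1) / 2) (abs_le.2 ⟨by linarith, by linarith⟩))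
  have hterm (n : ℕ) : ∑ p ∈ antidiagonal n,
      ((Ring.choose y p.1 : ℝ) : ℂ) * (((t - 1) / 2 : ℝ) * z) ^ p.1 *
        (((Ring.choose x p.2 : ℝ) : ℂ) * (((t + 1) / 2 : ℝ) * z) ^ p.2) =
      (jacobiSum x y n t : ℂ) * z ^ n := by
    rw [jacobiSum, Complex.ofReal_sum, sum_mul]
    refine sum_congr rfl fun p hp => ?_
    rw [← HasAntidiagonal.mem_antidiagonal.1 hp, mul_pow, mul_pow]
    push_cast
    ring
  have hsum := (summable_norm_sum_mul_antidiagonal_of_summable_norm hy' hx').of_norm.hasSum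
  rw [← tsum_mul_tsum_eq_tsum_sum_antidiagonal_of_summable_norm hy' hx', hy.tsum_eq,
    hx.tsum_eq] at hsum
  simpa only [hterm] using hsum

theorem coeff_eq_integral_circleMap {f : ℂ → ℂ} {a : ℕ → ℂ} {R : ℝ} (hR : 0 < R)
    (hf : DiffContOnCl ℂ f (Metric.ball 0 R))
    (ha : ∀ᶠ z in 𝓝 0, HasSum (fun n => a n * z ^ n) (f z)) (n : ℕ) :
    2 * π * a n = ∫ φ in 0..2 * π, f (circleMap 0 R φ) / circleMap 0 R φ ^ n := by
  lift R to ℝ≥0 using hR.le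
  have hseries : HasFPowerSeriesAt f (.ofScalars ℂ a) 0 := hasFPowerSeriesAt_iff.2 <| by
    simpa [FormalMultilinearSeries.coeff_ofScalars, mul_comm] using ha
  have hcoeff : a n = cauchyPowerSeries f 0 R n fun _ => 1 := by
    have h := congrArg (·.coeff n)
      (hseries.eq_formalMultilinearSeries (hf.hasFPowerSeriesOnBall hR).hasFPowerSeriesAt)
    rwa [FormalMultilinearSeries.coeff_ofScalars] at h
  rw [hcoeff, cauchyPowerSeries_apply, circleIntegral, smul_eq_mul,
    ← intervalIntegral.integral_const_mul, ← intervalIntegral.integral_const_mul]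
  refine intervalIntegral.integral_congr fun φ _ => ?_
  have hne : circleMap 0 R φ ≠ 0 := circleMap_ne_center hR.ne'
  have hpi : (π : ℂ) ≠ 0 := Complex.ofReal_ne_zero.2 pi_ne_zero
  simp only [deriv_circleMap, sub_zero, smul_eq_mul, one_div, inv_pow]
  field_simp

theorem re_one_add_nonneg {z : ℂ} (hz : ‖z‖ ≤ 1) : 0 ≤ (1 + z).re := by
  rw [Complex.add_re, Complex.one_re]
  linarith [neg_abs_le z.re, Complex.abs_re_le_norm z]

theorem diffContOnCl_one_add_mul_cpow {x : ℝ} (hx : 0 < x) {w : ℂ} {R : ℝ} (hw : ‖w‖ * R ≤ 1) :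
    DiffContOnCl ℂ (fun z => (1 + w * z) ^ (x : ℂ)) (Metric.ball 0 R) where
  differentiableOn z hz := by
    rw [mem_ball_zero_iff] at hz
    have hwz : ‖w * z‖ < 1 := by
      rcases eq_or_ne w 0 with rfl | hw0
      · simp
      · rw [norm_mul]
        exact (mul_lt_mul_of_pos_left hz (norm_pos_iff.2 hw0)).trans_le hw
    exact (DifferentiableAt.cpow_const (f := fun z => 1 + w * z) (by fun_prop)
      (Complex.mem_slitPlane_of_norm_lt_one hwz)).differentiableWithinAt
  continuousOn z hz := by
    have hz' := mem_closedBall_zero_iff.1 (Metric.closure_ball_subset_closedBall hz)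
    have hwz : ‖w * z‖ ≤ 1 := by
      rw [norm_mul]
      exact (mul_le_mul_of_nonneg_left hz' (norm_nonneg w)).trans hw
    exact ((Complex.continuousAt_cpow_const_of_re_pos (.inl (re_one_add_nonneg hwz))
      (by simpa using hx)).comp (f := fun z => 1 + w * z) (by fun_prop)).continuousWithinAt

theorem one_add_exp_mul_I (φ : ℝ) :
    1 + Complex.exp (φ * Complex.I) =
      (2 * cos (φ / 2) : ℝ) * Complex.exp ((φ / 2 : ℝ) * Complex.I) := by
  have hsq : Complex.exp (φ * Complex.I) = Complex.exp ((φ / 2 : ℝ) * Complex.I) ^ 2 := by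
    rw [← Complex.exp_nat_mul]
    push_cast
    ring_nf
  rw [hsq, Complex.exp_mul_I, ← Complex.ofReal_cos, ← Complex.ofReal_sin]
  have hpyth : (sin (φ / 2) : ℂ) ^ 2 + (cos (φ / 2) : ℂ) ^ 2 = 1 := by
    exact_mod_cast sin_sq_add_cos_sq (φ / 2)
  linear_combination (norm := (push_cast; ring)) -hpyth + (sin (φ / 2) : ℂ) ^ 2 * Complex.I_sq

theorem one_sub_exp_mul_I (φ : ℝ) :
    1 - Complex.exp (φ * Complex.I) =
      (2 * sin (φ / 2) : ℝ) * Complex.exp (((φ - π) / 2 : ℝ) * Complex.I) := by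
  have hneg : Complex.exp ((φ - π : ℝ) * Complex.I) = -Complex.exp (φ * Complex.I) := by
    rw [Complex.ofReal_sub, sub_mul, Complex.exp_sub, Complex.exp_pi_mul_I, div_neg, div_one]
  have hcos : cos ((φ - π) / 2) = sin (φ / 2) := by
    rw [sub_div, cos_sub_pi_div_two]
  rw [← hcos, ← one_add_exp_mul_I, hneg, sub_eq_add_neg]

theorem ofReal_mul_exp_mul_I_cpow {r ψ : ℝ} (hr : 0 < r) (hψ : ψ ∈ Ioc (-π) π) (x : ℝ) :
    ((r : ℂ) * Complex.exp (ψ * Complex.I)) ^ (x : ℂ) =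
      (r ^ x : ℝ) * Complex.exp ((x * ψ : ℝ) * Complex.I) := by
  have hlog : Complex.log (Complex.exp (ψ * Complex.I)) = ψ * Complex.I :=
    Complex.log_exp (by simpa using hψ.1) (by simpa using hψ.2)
  rw [Complex.cpow_def_of_ne_zero (mul_ne_zero (Complex.ofReal_ne_zero.2 hr.ne')
    (Complex.exp_ne_zero _)), Complex.log_ofReal_mul hr (Complex.exp_ne_zero _), hlog, add_mul,
    Complex.exp_add, rpow_def_of_pos hr, Complex.ofReal_exp]
  push_cast
  ring_nf

theorem integral_zero_two_pi_eq_of_conj {f : ℝ → ℂ} (hf : Continuous f)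
    (hconj : ∀ φ, f (2 * π - φ) = (starRingEnd ℂ) (f φ)) :
    ∫ φ in 0..2 * π, f φ = (2 * ∫ φ in 0..π, (f φ).re : ℝ) := by
  have hconj' : Continuous fun φ => (starRingEnd ℂ) (f φ) := Complex.continuous_conj.comp hf
  have hhalf : ∫ φ in π..2 * π, f φ = ∫ φ in 0..π, (starRingEnd ℂ) (f φ) := by
    rw [← intervalIntegral.integral_congr (fun φ _ => hconj φ),
      intervalIntegral.integral_comp_sub_left f]
    ring_nf
  rw [← intervalIntegral.integral_add_adjacent_intervals (hf.intervalIntegrable 0 π)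
    (hf.intervalIntegrable π _), hhalf, ← intervalIntegral.integral_add
    (hf.intervalIntegrable 0 π) (hconj'.intervalIntegrable 0 π),
    ← intervalIntegral.integral_const_mul, ← intervalIntegral.integral_ofReal]
  simp only [Complex.add_conj]

/-- The function `(1 - z)^y (1 + z)^x z^(-n)` at `z = exp (iφ)`: the integrand of Cauchy's formula
for the `n`-th Taylor coefficient of `(1 - z)^y (1 + z)^x` over the unit circle. -/
noncomputable def coeffIntegrand (x y : ℝ) (n : ℕ) (φ : ℝ) : ℂ :=
  (1 - Complex.exp (φ * Complex.I)) ^ (y : ℂ) * (1 + Complex.exp (φ * Complex.I)) ^ (x : ℂ) /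
    Complex.exp (φ * Complex.I) ^ n

theorem re_coeffIntegrand (x y : ℝ) (n : ℕ) {φ : ℝ} (hφ : φ ∈ Ioo 0 π) :
    (coeffIntegrand x y n φ).re =
      2 ^ (x + y) * halfWeight y x φ * cos ((x + y) * φ / 2 - y * π / 2 - n * φ) := by
  have hs := sin_half_pos hφ
  have hc := cos_half_pos hφ
  have hexp : Complex.exp (((x + y) * φ / 2 - y * π / 2 - n * φ : ℝ) * Complex.I) =
      Complex.exp ((y * ((φ - π) / 2) : ℝ) * Complex.I) *
        Complex.exp ((x * (φ / 2) : ℝ) * Complex.I) * Complex.exp (-(n * (φ * Complex.I))) := by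
    rw [← Complex.exp_add, ← Complex.exp_add]
    push_cast
    ring_nf
  rw [coeffIntegrand, one_add_exp_mul_I, one_sub_exp_mul_I,
    ofReal_mul_exp_mul_I_cpow (by positivity)
      ⟨by linarith [hφ.1, pi_pos], by linarith [hφ.2, pi_pos]⟩,
    ofReal_mul_exp_mul_I_cpow (by positivity)
      ⟨by linarith [hφ.1, pi_pos], by linarith [hφ.2, pi_pos]⟩,
    mul_rpow two_pos.le hs.le, mul_rpow two_pos.le hc.le, ← Complex.exp_nat_mul, div_eq_mul_inv,
    ← Complex.exp_neg, rpow_add two_pos, halfWeight,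
    ← Complex.exp_ofReal_mul_I_re (_ - _), ← Complex.re_ofReal_mul, hexp]
  congr 1
  push_cast
  ring

theorem re_one_add_exp_mul_I_nonneg (φ : ℝ) : 0 ≤ (1 + Complex.exp (φ * Complex.I)).re :=
  re_one_add_nonneg (Complex.norm_exp_ofReal_mul_I φ).le

theorem re_one_sub_exp_mul_I_nonneg (φ : ℝ) : 0 ≤ (1 - Complex.exp (φ * Complex.I)).re := by
  rw [sub_eq_add_neg]
  exact re_one_add_nonneg (by rw [norm_neg, Complex.norm_exp_ofReal_mul_I])

theorem continuous_coeffIntegrand {x y : ℝ} (hx : 0 < x) (hy : 0 < y) (n : ℕ) :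
    Continuous (coeffIntegrand x y n) := by
  have hsub : Continuous fun φ : ℝ => (1 - Complex.exp (φ * Complex.I)) ^ (y : ℂ) :=
    continuous_iff_continuousAt.2 fun φ =>
      (Complex.continuousAt_cpow_const_of_re_pos (.inl (re_one_sub_exp_mul_I_nonneg φ))
        (by simpa using hy)).comp (f := fun φ : ℝ => 1 - Complex.exp (φ * Complex.I)) (by fun_prop)
  have hadd : Continuous fun φ : ℝ => (1 + Complex.exp (φ * Complex.I)) ^ (x : ℂ) :=
    continuous_iff_continuousAt.2 fun φ =>
      (Complex.continuousAt_cpow_const_of_re_pos (.inl (re_one_add_exp_mul_I_nonneg φ))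
        (by simpa using hx)).comp (f := fun φ : ℝ => 1 + Complex.exp (φ * Complex.I)) (by fun_prop)
  exact (hsub.mul hadd).div (by fun_prop) fun φ => pow_ne_zero n (Complex.exp_ne_zero _)

theorem coeffIntegrand_two_pi_sub (x y : ℝ) (n : ℕ) (φ : ℝ) :
    coeffIntegrand x y n (2 * π - φ) = (starRingEnd ℂ) (coeffIntegrand x y n φ) := by
  have hexp : Complex.exp ((2 * π - φ : ℝ) * Complex.I) =
      (starRingEnd ℂ) (Complex.exp (φ * Complex.I)) := by
    rw [← Complex.exp_conj, map_mul, Complex.conj_ofReal, Complex.conj_I,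
      ← Complex.exp_periodic (φ * -Complex.I)]
    push_cast
    ring_nf
  have harg {z : ℂ} (hz : 0 ≤ z.re) : z.arg ≠ π := fun h =>
    (Complex.arg_eq_pi_iff.1 h).1.not_ge hz
  simp only [coeffIntegrand, hexp, map_div₀, map_mul, map_pow]
  rw [← Complex.conj_ofReal x, ← Complex.conj_ofReal y,
    ← Complex.conj_cpow _ _ (harg (re_one_add_exp_mul_I_nonneg φ)),
    ← Complex.conj_cpow _ _ (harg (re_one_sub_exp_mul_I_nonneg φ))]
  simp only [map_add, map_sub, map_one, Complex.conj_ofReal]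

theorem two_pi_mul_two_pow_mul_jacobiSum_zero {x y : ℝ} (hx : 0 < x) (hy : 0 < y) (n : ℕ) :
    2 * π * (2 ^ n * jacobiSum x y n 0 : ℂ) = ∫ φ in 0..2 * π, coeffIntegrand x y n φ := by
  have hdiff : DiffContOnCl ℂ (fun z : ℂ => (1 + (-1) * z) ^ (y : ℂ) * (1 + 1 * z) ^ (x : ℂ))
      (Metric.ball 0 1) :=
    (diffContOnCl_one_add_mul_cpow hy (by simp)).smul (diffContOnCl_one_add_mul_cpow hx (by simp))
  have hsum : ∀ᶠ z : ℂ in 𝓝 0, HasSum (fun n => (2 ^ n * jacobiSum x y n 0 : ℂ) * z ^ n)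
      ((1 + (-1) * z) ^ (y : ℂ) * (1 + 1 * z) ^ (x : ℂ)) := by
    filter_upwards [Metric.ball_mem_nhds (0 : ℂ) (by norm_num : (0 : ℝ) < 1 / 2)] with z hz
    rw [mem_ball_zero_iff] at hz
    have h := hasSum_jacobiSum_mul_pow x y (t := 0) (by simp) (z := 2 * z)
      (by rw [norm_mul, Complex.norm_two]; linarith)
    convert! h using 1
    · ext n
      ring
    · push_cast
      ring_nf
  rw [coeff_eq_integral_circleMap one_pos hdiff hsum n]
  simp only [coeffIntegrand, circleMap_zero, Complex.ofReal_one, one_mul, neg_one_mul,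
    ← sub_eq_add_neg]

theorem pi_mul_two_pow_mul_jacobiSum_zero {x y : ℝ} (hx : 0 < x) (hy : 0 < y) (n : ℕ) :
    π * (2 ^ n * jacobiSum x y n 0) =
      ∫ φ in Ioo 0 π, 2 ^ (x + y) * halfWeight y x φ *
        cos ((x + y) * φ / 2 - y * π / 2 - n * φ) := by
  have hre : π * (2 ^ n * jacobiSum x y n 0) = ∫ φ in 0..π, (coeffIntegrand x y n φ).re := by
    have h := two_pi_mul_two_pow_mul_jacobiSum_zero hx hy n
    rw [integral_zero_two_pi_eq_of_conj (continuous_coeffIntegrand hx hy n)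
      (coeffIntegrand_two_pi_sub x y n)] at h
    norm_cast at h
    push_cast at h
    linarith
  rw [hre, intervalIntegral.integral_of_le pi_pos.le, integral_Ioc_eq_integral_Ioo]
  exact setIntegral_congr_fun measurableSet_Ioo fun φ hφ => re_coeffIntegrand x y n hφ

theorem sin_pow_eq_halfWeight (n : ℕ) (θ : ℝ) : sin θ ^ n = 2 ^ n * halfWeight n n θ := by
  rw [halfWeight, rpow_natCast, rpow_natCast, sin_eq_two_mul_half, mul_pow, mul_pow, mul_assoc]

theorem pi_mul_jacobiSum_zero {a b : ℝ} (ha : -1 < a) (hb : -1 < b) {n : ℕ} (hn : 1 ≤ n) :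
    π * jacobiSum (n + a) (n + b) n 0 = 2 ^ (a + b) *
      ∫ φ in Ioo 0 π, sin φ ^ n *
        (halfWeight b a φ * cos ((a + b) * φ / 2 - (n + b) * π / 2)) := by
  have hn' : (1 : ℝ) ≤ n := Nat.one_le_cast.2 hn
  have hint := pi_mul_two_pow_mul_jacobiSum_zero (x := n + a) (y := n + b) (by linarith)
    (by linarith) n
  have hpow : (2 : ℝ) ^ (n + a + (n + b)) = 2 ^ n * 2 ^ n * 2 ^ (a + b) := by
    rw [show (n + a + (n + b) : ℝ) = n + n + (a + b) by ring, rpow_add two_pos, rpow_add two_pos,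
      rpow_natCast]
  have hcongr : EqOn (fun φ => (2 : ℝ) ^ (n + a + (n + b)) * halfWeight (n + b) (n + a) φ *
      cos ((n + a + (n + b)) * φ / 2 - (n + b) * π / 2 - n * φ))
      (fun φ => 2 ^ n * (2 ^ (a + b) * (sin φ ^ n *
        (halfWeight b a φ * cos ((a + b) * φ / 2 - (n + b) * π / 2))))) (Ioo 0 π) := by
    intro φ hφ
    have hphase : (n + a + (n + b)) * φ / 2 - (n + b) * π / 2 - n * φ =
        (a + b) * φ / 2 - (n + b) * π / 2 := by ring
    simp only [hpow, hphase, halfWeight_add n n b a hφ, sin_pow_eq_halfWeight]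
    ring
  rw [setIntegral_congr_fun measurableSet_Ioo hcongr, integral_const_mul,
    integral_const_mul] at hint
  exact mul_left_cancel₀ (pow_ne_zero n two_ne_zero) ((mul_left_comm _ _ _).trans hint)

/-! ### Wallis integrals and Laplace's method -/

/-- The Wallis integral `∫_0^π sin^n`. -/
noncomputable def wallisIntegral (n : ℕ) : ℝ := ∫ φ in 0..π, sin φ ^ n

theorem wallisIntegral_pos (n : ℕ) : 0 < wallisIntegral n := integral_sin_pow_pos n

theorem wallisIntegral_add_two (n : ℕ) :
    (n + 2) * wallisIntegral (n + 2) = (n + 1) * wallisIntegral n := by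
  rw [wallisIntegral, wallisIntegral, integral_sin_pow]
  simp only [sin_zero, sin_pi, ne_eq, Nat.succ_ne_zero, not_false_eq_true, zero_pow, zero_mul,
    sub_zero, zero_div, zero_add]
  field_simp

theorem wallisIntegral_mul_succ (n : ℕ) :
    (n + 1) * (wallisIntegral n * wallisIntegral (n + 1)) = 2 * π := by
  induction n with
  | zero => norm_num [wallisIntegral, integral_sin, mul_comm]
  | succ n ih =>
    push_cast
    linear_combination wallisIntegral (n + 1) * wallisIntegral_add_two n + ih

theorem wallisIntegral_succ_le (n : ℕ) : wallisIntegral (n + 1) ≤ wallisIntegral n :=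
  integral_sin_pow_succ_le n

theorem wallisIntegral_succ_sq_le (n : ℕ) :
    wallisIntegral (n + 1) ^ 2 ≤ wallisIntegral n * wallisIntegral (n + 2) := by
  have hdiscr := discrim_le_zero (a := wallisIntegral n) (b := -2 * wallisIntegral (n + 1))
    (c := wallisIntegral (n + 2)) fun x => by
      have hsq : ∫ φ in 0..π, sin φ ^ n * (x - sin φ) ^ 2 = wallisIntegral n * (x * x) +
          -2 * wallisIntegral (n + 1) * x + wallisIntegral (n + 2) := by
        have hexpand : ∀ φ, sin φ ^ n * (x - sin φ) ^ 2 =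
            sin φ ^ n * (x * x) + sin φ ^ (n + 1) * (-2 * x) + sin φ ^ (n + 2) := fun φ => by ring
        simp only [hexpand]
        rw [intervalIntegral.integral_add, intervalIntegral.integral_add,
          intervalIntegral.integral_mul_const, intervalIntegral.integral_mul_const]
        · simp only [wallisIntegral]
          ring
        all_goals exact Continuous.intervalIntegrable (by fun_prop) _ _
      rw [← hsq]
      exact intervalIntegral.integral_nonneg pi_pos.le fun φ hφ =>
        mul_nonneg (pow_nonneg (sin_nonneg_of_mem_Icc hφ) n) (sq_nonneg _)
  rw [discrim] at hdiscr
  linarith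

theorem wallisIntegral_pow_four_le (n : ℕ) :
    n * (n + 1) * wallisIntegral n ^ 4 ≤ 4 * π ^ 2 := by
  obtain _ | m := n
  · rw [Nat.cast_zero, zero_mul, zero_mul]
    positivity
  have hconvex := wallisIntegral_succ_sq_le m
  have h₀ := wallisIntegral_mul_succ m
  have h₁ := wallisIntegral_mul_succ (m + 1)
  push_cast at h₁ ⊢
  calc (m + 1 : ℝ) * (m + 1 + 1) * wallisIntegral (m + 1) ^ 4
      = (m + 1) * (m + 1 + 1) * wallisIntegral (m + 1) ^ 2 * wallisIntegral (m + 1) ^ 2 := by ring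
    _ ≤ (m + 1) * (m + 1 + 1) * wallisIntegral (m + 1) ^ 2 *
        (wallisIntegral m * wallisIntegral (m + 2)) := by gcongr
    _ = ((m + 1) * (wallisIntegral m * wallisIntegral (m + 1))) *
        ((m + 1 + 1) * (wallisIntegral (m + 1) * wallisIntegral (m + 2))) := by ring
    _ = 4 * π ^ 2 := by rw [h₀, h₁]; ring

theorem le_wallisIntegral_pow_four (n : ℕ) :
    4 * π ^ 2 * (n + 2) ≤ (n + 1) ^ 3 * wallisIntegral n ^ 4 := by
  have hconvex := wallisIntegral_succ_sq_le n
  have hmul := wallisIntegral_mul_succ n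
  have hrec := wallisIntegral_add_two n
  calc 4 * π ^ 2 * (n + 2)
      = (n + 1) ^ 2 * wallisIntegral n ^ 2 * (n + 2) * wallisIntegral (n + 1) ^ 2 := by
        linear_combination (-(n + 2) * ((n + 1) * (wallisIntegral n * wallisIntegral (n + 1))
          + 2 * π)) * hmul
    _ ≤ (n + 1) ^ 2 * wallisIntegral n ^ 2 * (n + 2) *
        (wallisIntegral n * wallisIntegral (n + 2)) := by gcongr
    _ = (n + 1) ^ 3 * wallisIntegral n ^ 4 := by
        linear_combination (n + 1) ^ 2 * wallisIntegral n ^ 3 * hrec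

theorem abs_sub_one_le_abs_pow_sub_one {z : ℝ} (hz : 0 ≤ z) {k : ℕ} (hk : k ≠ 0) :
    |z - 1| ≤ |z ^ k - 1| := by
  rcases le_total z 1 with h | h
  · have := pow_le_of_le_one hz h hk
    rw [abs_of_nonpos (by linarith), abs_of_nonpos (by linarith)]
    linarith
  · have := le_self_pow₀ h hk
    rw [abs_of_nonneg (by linarith), abs_of_nonneg (by linarith)]
    linarith

theorem abs_sqrt_mul_wallisIntegral_sub_one_le {n : ℕ} (hn : 1 ≤ n) :
    |√((n + 1 / 2) / (2 * π)) * wallisIntegral n - 1| ≤ (n : ℝ)⁻¹ ^ 2 := by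
  have hn' : (1 : ℝ) ≤ n := Nat.one_le_cast.2 hn
  have hW := wallisIntegral_pos n
  have hpow : (√((n + 1 / 2) / (2 * π)) * wallisIntegral n) ^ 4 =
      (n + 1 / 2) ^ 2 * wallisIntegral n ^ 4 / (4 * π ^ 2) := by
    rw [mul_pow, show (4 : ℕ) = 2 * 2 from rfl, pow_mul √_, sq_sqrt (by positivity)]
    field_simp
    ring
  refine (abs_sub_one_le_abs_pow_sub_one (by positivity) four_ne_zero).trans ?_
  have hupper : wallisIntegral n ^ 4 / (4 * π ^ 2) ≤ 1 / (n * (n + 1)) := by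
    rw [div_le_div_iff₀ (by positivity) (by positivity)]
    linarith [wallisIntegral_pow_four_le n]
  have hlower : (n + 2) / (n + 1) ^ 3 ≤ wallisIntegral n ^ 4 / (4 * π ^ 2) := by
    rw [div_le_div_iff₀ (by positivity) (by positivity)]
    linarith [le_wallisIntegral_pow_four n]
  rw [hpow, mul_div_assoc, abs_sub_le_iff]
  constructor
  · calc (n + 1 / 2 : ℝ) ^ 2 * (wallisIntegral n ^ 4 / (4 * π ^ 2)) - 1
        ≤ (n + 1 / 2 : ℝ) ^ 2 * (1 / (n * (n + 1))) - 1 := by gcongr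
      _ = 1 / (4 * (n * (n + 1)) : ℝ) := by field_simp; ring
      _ ≤ (n : ℝ)⁻¹ ^ 2 := by
        rw [inv_pow, ← one_div]
        exact one_div_le_one_div_of_le (by positivity) (by nlinarith)
  · calc 1 - (n + 1 / 2 : ℝ) ^ 2 * (wallisIntegral n ^ 4 / (4 * π ^ 2))
        ≤ 1 - (n + 1 / 2 : ℝ) ^ 2 * ((n + 2) / (n + 1) ^ 3) := by gcongr
      _ = (3 * n + 2 : ℝ) / (4 * (n + 1) ^ 3) := by field_simp; ring
      _ ≤ (n : ℝ)⁻¹ ^ 2 := by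
        rw [inv_pow, ← one_div, div_le_div_iff₀ (by positivity) (by positivity)]
        nlinarith [pow_pos (zero_lt_one.trans_le hn') 3, pow_pos (zero_lt_one.trans_le hn') 2]

theorem abs_sqrt_one_add_sub_le {u : ℝ} (hu : -1 ≤ u) : |√(1 + u) - (1 + u / 2)| ≤ u ^ 2 / 2 := by
  have hsq : √(1 + u) ^ 2 = 1 + u := sq_sqrt (by linarith)
  have hnn : 0 ≤ √(1 + u) := sqrt_nonneg _
  have hle : |√(1 + u) - 1| ≤ |u| := by
    simpa [hsq] using abs_sub_one_le_abs_pow_sub_one hnn two_ne_zero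
  rw [show √(1 + u) - (1 + u / 2) = -((√(1 + u) - 1) ^ 2 / 2) by linarith, abs_neg, abs_div,
    abs_two, abs_sq]
  gcongr ?_ / 2
  exact sq_le_sq.2 hle

theorem isBigO_inv_natCast_add (c d : ℝ) :
    (fun n : ℕ => ((n : ℝ) + c)⁻¹) =O[atTop] fun n : ℕ => ((n : ℝ) + d)⁻¹ := by
  have hlim : Tendsto (fun n : ℕ => (n : ℝ) + c) atTop atTop :=
    tendsto_atTop_add_const_right _ c tendsto_natCast_atTop_atTop
  have hadd : (fun n : ℕ => (n : ℝ) + d) =O[atTop] fun n : ℕ => (n : ℝ) + c :=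
    ((isBigO_refl _ _).add
      (isLittleO_const_left.2 (.inr (tendsto_norm_atTop_atTop.comp hlim))).isBigO).congr_left
      fun n => add_add_sub_cancel _ _ _
  refine hadd.inv_rev ?_
  filter_upwards [(tendsto_atTop_add_const_right _ d
    tendsto_natCast_atTop_atTop).eventually_ne_atTop 0] with n hn hn₀ using absurd hn₀ hn

theorem isBigO_sqrt_mul_wallisIntegral_sub (g : ℝ) :
    (fun n : ℕ => √((n + g + 1 / 2) / (2 * π)) * wallisIntegral n -
      (1 + g / 2 * (n + g + 1 / 2 : ℝ)⁻¹)) =O[atTop] fun n : ℕ => (n : ℝ)⁻¹ ^ 2 := by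
  set Z : ℕ → ℝ := fun n => √((n + 1 / 2) / (2 * π)) * wallisIntegral n
  set u : ℕ → ℝ := fun n => g * (n + 1 / 2 : ℝ)⁻¹
  have hu : u =O[atTop] fun n : ℕ => (n : ℝ)⁻¹ := by
    simpa only [add_zero] using (isBigO_inv_natCast_add (1 / 2) 0).const_mul_left g
  have hu₀ : Tendsto u atTop (𝓝 0) := hu.trans_tendsto tendsto_inv_atTop_nhds_zero_nat
  have hZ : (fun n => Z n - 1) =O[atTop] fun n : ℕ => (n : ℝ)⁻¹ ^ 2 := by
    refine IsBigO.of_bound 1 ?_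
    filter_upwards [eventually_ge_atTop 1] with n hn
    rw [one_mul, norm_of_nonneg (by positivity : 0 ≤ (n : ℝ)⁻¹ ^ 2)]
    exact abs_sqrt_mul_wallisIntegral_sub_one_le hn
  have hZ₁ : Z =O[atTop] fun _ => (1 : ℝ) :=
    ((hZ.trans_tendsto (by simpa using (tendsto_inv_atTop_nhds_zero_nat (𝕜 := ℝ)).pow 2)).add_const
      1).isBigO_one ℝ |>.congr_left fun n => sub_add_cancel _ _
  have hsqrt : (fun n => √(1 + u n) - (1 + u n / 2)) =O[atTop] fun n : ℕ => (n : ℝ)⁻¹ ^ 2 := by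
    refine IsBigO.trans (IsBigO.of_bound (1 / 2) ?_) (hu.pow 2)
    filter_upwards [hu₀.eventually (eventually_ge_nhds neg_one_lt_zero)] with n hn
    rw [norm_eq_abs, norm_eq_abs, abs_sq]
    linarith [abs_sqrt_one_add_sub_le hn]
  have hu₁ : (fun n => 1 + u n / 2) =O[atTop] fun _ => (1 : ℝ) :=
    ((hu₀.div_const 2).const_add 1).isBigO_one ℝ
  have hinv : (fun n : ℕ => g / 2 * u n * (n + g + 1 / 2 : ℝ)⁻¹) =O[atTop]
      fun n : ℕ => (n : ℝ)⁻¹ ^ 2 :=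
    ((hu.const_mul_left (g / 2)).mul (isBigO_inv_natCast_add (g + 1 / 2) 0)).congr
      (fun n => by rw [add_assoc]) fun n => by rw [add_zero, sq]
  refine (((hsqrt.mul hZ₁).congr_right fun n => mul_one _).add
    ((hu₁.mul hZ).congr_right fun n => one_mul _)).add hinv |>.congr' ?_ EventuallyEq.rfl
  filter_upwards [hu₀.eventually (eventually_gt_nhds neg_one_lt_zero)] with n hn
  have hn₀ : (n + 1 / 2 : ℝ) ≠ 0 := by positivity
  have hN : n + g + 1 / 2 = (1 + u n) * (n + 1 / 2 : ℝ) := by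
    simp only [u]
    field_simp
    ring
  have hN₀ : (n + g + 1 / 2 : ℝ) ≠ 0 := hN ▸ mul_ne_zero (by linarith) hn₀
  have hsplit : √((n + g + 1 / 2) / (2 * π)) * wallisIntegral n = √(1 + u n) * Z n := by
    rw [hN, mul_div_assoc, sqrt_mul (by linarith), mul_assoc]
  rw [hsplit]
  have hres : u n / 2 - g / 2 * (n + g + 1 / 2 : ℝ)⁻¹ = g / 2 * u n * (n + g + 1 / 2 : ℝ)⁻¹ := by
    linear_combination (g / 2 * (n + g + 1 / 2 : ℝ)⁻¹) * mul_inv_cancel₀ hn₀ -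
      (g / 2 * (n + 1 / 2 : ℝ)⁻¹) * mul_inv_cancel₀ hN₀
  linear_combination -hres

theorem integral_sin_pow_mul_cos_sq (n : ℕ) :
    ∫ φ in 0..π, sin φ ^ n * cos φ ^ 2 = wallisIntegral n / (n + 2) := by
  have hsplit : ∀ φ : ℝ, sin φ ^ n * cos φ ^ 2 = sin φ ^ n - sin φ ^ (n + 2) := fun φ => by
    rw [cos_sq']
    ring
  simp only [hsplit]
  rw [intervalIntegral.integral_sub
    (Continuous.intervalIntegrable (by fun_prop) _ _)
    (Continuous.intervalIntegrable (by fun_prop) _ _)]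
  change wallisIntegral n - wallisIntegral (n + 2) = _
  rw [eq_div_iff (by positivity)]
  linear_combination -wallisIntegral_add_two n

theorem integral_sin_pow_mul_cos_pow_four (n : ℕ) :
    ∫ φ in 0..π, sin φ ^ n * cos φ ^ 4 = 3 * wallisIntegral n / ((n + 2) * (n + 4)) := by
  have hsplit : ∀ φ : ℝ, sin φ ^ n * cos φ ^ 4 =
      sin φ ^ n * cos φ ^ 2 - sin φ ^ (n + 2) * cos φ ^ 2 := fun φ => by
    linear_combination sin φ ^ n * cos φ ^ 2 * sin_sq_add_cos_sq φ
  simp only [hsplit]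
  rw [intervalIntegral.integral_sub
    (Continuous.intervalIntegrable (by fun_prop) _ _)
    (Continuous.intervalIntegrable (by fun_prop) _ _), integral_sin_pow_mul_cos_sq,
    integral_sin_pow_mul_cos_sq]
  have hrec := wallisIntegral_add_two n
  push_cast
  field_simp
  linear_combination -(n + 4 : ℝ) * hrec

theorem isBigO_add_sub_two_smul_of_analyticAt {E : Type*} [NormedAddCommGroup E]
    [NormedSpace ℝ E] [CompleteSpace E] {f : ℝ → E} {x₀ : ℝ}
    (hf : AnalyticAt ℝ f x₀) :
    (fun x => f (x₀ + x) + f (x₀ - x) - (2 : ℝ) • f x₀ - x ^ 2 • deriv (deriv f) x₀) =O[𝓝 0]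
      fun x => x ^ 4 := by
  obtain ⟨p, r, hp⟩ := hf
  have hp₀ : p.coeff 0 = f x₀ := hp.coeff_zero _
  have hp₂ : (2 : ℝ) • p.coeff 2 = deriv (deriv f) x₀ := by
    have hfact := hp.factorial_smul 1 2
    rw [← iteratedDeriv_eq_iteratedFDeriv, iteratedDeriv_succ, iteratedDeriv_one] at hfact
    rw [← hfact, two_smul, Nat.factorial_two, two_nsmul]
    rfl
  have hplus : (fun x => f (x₀ + x) - p.partialSum 4 x) =O[𝓝 0] fun x => x ^ 4 := by
    simpa [Even.pow_abs (show Even 4 by decide)] using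
      hp.hasFPowerSeriesAt.isBigO_sub_partialSum_pow 4
  have hminus : (fun x => f (x₀ - x) - p.partialSum 4 (-x)) =O[𝓝 0] fun x => x ^ 4 := by
    simpa [Function.comp_def, sub_eq_add_neg, Even.neg_pow (show Even 4 by decide)] using
      hplus.comp_tendsto (show Tendsto Neg.neg (𝓝 (0 : ℝ)) (𝓝 0) by simpa using tendsto_neg (0 : ℝ))
  refine (hplus.add hminus).congr_left fun x => ?_
  simp only [FormalMultilinearSeries.partialSum, FormalMultilinearSeries.apply_eq_pow_smul_coeff,
    Finset.sum_range_succ, Finset.sum_range_zero, ← hp₀, ← hp₂]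
  module

theorem isBigO_sq_sub_sin_sq : (fun x => x ^ 2 - sin x ^ 2) =O[𝓝 0] fun x => x ^ 4 := by
  have hsin : AnalyticAt ℝ (fun x => sin x ^ 2) 0 := analyticAt_sin.pow 2
  have hderiv : deriv (fun x => sin x ^ 2) = fun x => 2 * sin x * cos x := by
    ext x
    simp
  have hderiv₂ : HasDerivAt (fun x => 2 * sin x * cos x) 2 0 :=
    (((hasDerivAt_sin 0).const_mul 2).mul (hasDerivAt_cos 0)).congr_deriv (by simp)
  have hsymm := isBigO_add_sub_two_smul_of_analyticAt hsin
  rw [hderiv, hderiv₂.deriv] at hsymm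
  refine (hsymm.const_mul_left (-1 / 2)).congr_left fun x => ?_
  simp only [zero_add, zero_sub, sin_neg, even_two.neg_pow, sin_zero, smul_eq_mul]
  ring

theorem exists_sin_mul_norm_le {E : Type*} [NormedAddCommGroup E] {R : ℝ → E} {B : ℝ} {k : ℕ}
    (hB : ∀ φ ∈ Icc 0 π, sin φ * ‖R φ‖ ≤ B)
    (hR : R =O[𝓝 (π / 2)] fun φ => cos φ ^ k) :
    ∃ K, 0 ≤ K ∧ ∀ φ ∈ Icc 0 π, sin φ * ‖R φ‖ ≤ K * |cos φ| ^ k := by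
  obtain ⟨c, hc, hcR⟩ := hR.exists_pos
  obtain ⟨δ, hδ, hball⟩ := Metric.eventually_nhds_iff.1 hcR.bound
  have hB₀ : 0 ≤ B := by simpa using hB 0 ⟨le_rfl, pi_pos.le⟩
  refine ⟨c + B / (2 / π * δ) ^ k, by positivity, fun φ hφ => ?_⟩
  rcases lt_or_ge |φ - π / 2| δ with hnear | hfar
  · have hRφ := hball (y := φ) (by rwa [Real.dist_eq])
    rw [norm_pow, norm_eq_abs] at hRφ
    calc sin φ * ‖R φ‖ ≤ 1 * (c * |cos φ| ^ k) :=
          mul_le_mul (sin_le_one φ) hRφ (norm_nonneg _) zero_le_one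
      _ ≤ (c + B / (2 / π * δ) ^ k) * |cos φ| ^ k := by
        rw [one_mul]
        gcongr
        exact le_add_of_nonneg_right (by positivity)
  · have hcos : 2 / π * δ ≤ |cos φ| := by
      rw [← sin_pi_div_two_sub, ← abs_neg, ← sin_neg, neg_sub]
      refine le_trans (by gcongr) (mul_abs_le_abs_sin ?_)
      rw [abs_le]
      constructor <;> linarith [hφ.1, hφ.2]
    calc sin φ * ‖R φ‖ ≤ B := hB φ hφ
      _ = B / (2 / π * δ) ^ k * (2 / π * δ) ^ k := (div_mul_cancel₀ _ (by positivity)).symm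
      _ ≤ B / (2 / π * δ) ^ k * |cos φ| ^ k := by gcongr
      _ ≤ (c + B / (2 / π * δ) ^ k) * |cos φ| ^ k := by
        gcongr
        exact le_add_of_nonneg_left hc.le

section Laplace

variable {E : Type*} [NormedAddCommGroup E] [NormedSpace ℝ E]

theorem integral_add_comp_pi_sub {G : ℝ → E} (hG : IntervalIntegrable G volume 0 π) :
    ∫ φ in 0..π, (G φ + G (π - φ)) = (2 : ℝ) • ∫ φ in 0..π, G φ := by
  have hG' : IntervalIntegrable (fun φ => G (π - φ)) volume 0 π := by
    simpa using (hG.comp_sub_left π).symm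
  rw [intervalIntegral.integral_add hG hG', intervalIntegral.integral_comp_sub_left, sub_self,
    sub_zero, two_smul]

theorem norm_integral_sin_pow_smul_le {R : ℝ → E} {K : ℝ}
    (hK : ∀ φ ∈ Icc 0 π, sin φ * ‖R φ‖ ≤ K * cos φ ^ 4) (n : ℕ) :
    ‖∫ φ in 0..π, sin φ ^ (n + 1) • R φ‖ ≤ K * (3 * wallisIntegral n / ((n + 2) * (n + 4))) := by
  rw [← integral_sin_pow_mul_cos_pow_four, ← intervalIntegral.integral_const_mul]
  refine intervalIntegral.norm_integral_le_of_norm_le pi_pos.le (.of_forall fun φ hφ => ?_)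
    (Continuous.intervalIntegrable (by fun_prop) _ _)
  have hsin : 0 ≤ sin φ := sin_nonneg_of_mem_Icc ⟨hφ.1.le, hφ.2⟩
  calc ‖sin φ ^ (n + 1) • R φ‖ = sin φ ^ n * (sin φ * ‖R φ‖) := by
        rw [norm_smul, norm_of_nonneg (by positivity)]
        ring
    _ ≤ sin φ ^ n * (K * cos φ ^ 4) :=
        mul_le_mul_of_nonneg_left (hK φ ⟨hφ.1.le, hφ.2⟩) (pow_nonneg hsin n)
    _ = K * (sin φ ^ n * cos φ ^ 4) := by ring

theorem intervalIntegrable_sin_pow_smul {F : ℝ → E} {M : ℝ}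
    (hF : AEStronglyMeasurable F (volume.restrict (Ioc 0 π)))
    (hM : ∀ φ ∈ Icc 0 π, sin φ * ‖F φ‖ ≤ M) (n : ℕ) :
    IntervalIntegrable (fun φ => sin φ ^ (n + 1) • F φ) volume 0 π := by
  rw [intervalIntegrable_iff_integrableOn_Ioc_of_le pi_pos.le]
  refine Integrable.of_bound ((continuous_sin.pow _).aestronglyMeasurable.smul hF) M
    ((ae_restrict_iff' measurableSet_Ioc).2 (.of_forall fun φ hφ => ?_))
  have hsin : 0 ≤ sin φ := sin_nonneg_of_mem_Icc ⟨hφ.1.le, hφ.2⟩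
  calc ‖sin φ ^ (n + 1) • F φ‖ = sin φ ^ n * (sin φ * ‖F φ‖) := by
        rw [norm_smul, norm_of_nonneg (by positivity)]
        ring
    _ ≤ 1 * M := by
        gcongr
        · exact pow_le_one₀ hsin (sin_le_one φ)
        · exact hM φ ⟨hφ.1.le, hφ.2⟩
    _ = M := one_mul M

theorem wallisIntegral_le_two_mul_succ (n : ℕ) :
    wallisIntegral n ≤ 2 * wallisIntegral (n + 1) := by
  have hrec := wallisIntegral_add_two n
  have hle := wallisIntegral_succ_le (n + 1)
  have hpos := wallisIntegral_pos (n + 2)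
  nlinarith [(Nat.cast_nonneg n : (0 : ℝ) ≤ n)]

theorem sin_mul_norm_symm_remainder_le {F : ℝ → E} {M : ℝ}
    (hM : ∀ φ ∈ Icc 0 π, sin φ * ‖F φ‖ ≤ M) (c₀ c₂ : E) {φ : ℝ} (hφ : φ ∈ Icc 0 π) :
    sin φ * ‖F φ + F (π - φ) - (2 : ℝ) • c₀ - cos φ ^ 2 • c₂‖ ≤ M + M + ‖(2 : ℝ) • c₀‖ + ‖c₂‖ := by
  have hsin : 0 ≤ sin φ := sin_nonneg_of_mem_Icc hφ
  have hreflect : sin φ * ‖F (π - φ)‖ ≤ M := by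
    simpa using hM (π - φ) ⟨by linarith [hφ.2], by linarith [hφ.1]⟩
  have hcos : ‖cos φ ^ 2 • c₂‖ ≤ ‖c₂‖ := by
    rw [norm_smul, norm_of_nonneg (sq_nonneg _)]
    exact mul_le_of_le_one_left (norm_nonneg _) (cos_sq_le_one φ)
  calc sin φ * ‖F φ + F (π - φ) - (2 : ℝ) • c₀ - cos φ ^ 2 • c₂‖
      ≤ sin φ * (‖F φ‖ + ‖F (π - φ)‖ + ‖(2 : ℝ) • c₀‖ + ‖c₂‖) := by
        gcongr
        exact (norm_sub_le _ _).trans (add_le_add ((norm_sub_le _ _).trans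
          (add_le_add_left (norm_add_le _ _) _)) hcos)
    _ = sin φ * ‖F φ‖ + sin φ * ‖F (π - φ)‖ + sin φ * (‖(2 : ℝ) • c₀‖ + ‖c₂‖) := by ring
    _ ≤ M + M + 1 * (‖(2 : ℝ) • c₀‖ + ‖c₂‖) := by
        gcongr
        · exact hM φ hφ
        · exact sin_le_one φ
    _ = M + M + ‖(2 : ℝ) • c₀‖ + ‖c₂‖ := by ring

theorem integral_sin_pow_smul_symm_remainder [CompleteSpace E] {F : ℝ → E} {n : ℕ}
    (hF : IntervalIntegrable (fun φ => sin φ ^ n • F φ) volume 0 π) (c₀ c₂ : E) :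
    ∫ φ in 0..π, sin φ ^ n • (F φ + F (π - φ) - (2 : ℝ) • c₀ - cos φ ^ 2 • c₂) =
      (2 : ℝ) • ((∫ φ in 0..π, sin φ ^ n • F φ) -
        wallisIntegral n • (c₀ + (2 * (n + 2) : ℝ)⁻¹ • c₂)) := by
  have hG := hF.add (by simpa using (hF.comp_sub_left π).symm :
    IntervalIntegrable (fun φ => sin φ ^ n • F (π - φ)) volume 0 π)
  have hint := integral_add_comp_pi_sub hF
  simp only [sin_pi_sub] at hint
  have hc₀ : IntervalIntegrable (fun φ => sin φ ^ n • (2 : ℝ) • c₀) volume 0 π :=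
    Continuous.intervalIntegrable (by fun_prop) _ _
  have hc₂ : IntervalIntegrable (fun φ => (sin φ ^ n * cos φ ^ 2) • c₂) volume 0 π :=
    Continuous.intervalIntegrable (by fun_prop) _ _
  simp only [smul_sub, smul_add, smul_smul _ (cos _ ^ 2)]
  rw [intervalIntegral.integral_sub (hG.sub hc₀) hc₂, intervalIntegral.integral_sub hG hc₀, hint,
    intervalIntegral.integral_smul_const, intervalIntegral.integral_smul_const,
    integral_sin_pow_mul_cos_sq, ← wallisIntegral]
  match_scalars <;> field_simp

theorem isBigO_integral_sin_pow_smul_sub [CompleteSpace E] {F : ℝ → E} {M : ℝ} {c₀ c₂ : E}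
    (hF : AEStronglyMeasurable F (volume.restrict (Ioc 0 π)))
    (hM : ∀ φ ∈ Icc 0 π, sin φ * ‖F φ‖ ≤ M)
    (hF₄ : (fun φ => F φ + F (π - φ) - (2 : ℝ) • c₀ - cos φ ^ 2 • c₂) =O[𝓝 (π / 2)]
      fun φ => cos φ ^ 4) :
    (fun n : ℕ => (∫ φ in 0..π, sin φ ^ n • F φ) -
      wallisIntegral n • (c₀ + (2 * (n + 2) : ℝ)⁻¹ • c₂)) =O[atTop]
      fun n : ℕ => wallisIntegral n * (n : ℝ)⁻¹ ^ 2 := by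
  obtain ⟨K, hK, hrem⟩ := exists_sin_mul_norm_le
    (fun φ hφ => sin_mul_norm_symm_remainder_le hM c₀ c₂ hφ) hF₄
  simp only [(show Even 4 by decide).pow_abs] at hrem
  refine IsBigO.of_bound (3 * K) ?_
  filter_upwards [eventually_ge_atTop 1] with n hn
  obtain ⟨m, rfl⟩ := Nat.exists_eq_add_of_le' hn
  have hW := wallisIntegral_pos (m + 1)
  have hbound := norm_integral_sin_pow_smul_le hrem m
  rw [integral_sin_pow_smul_symm_remainder (intervalIntegrable_sin_pow_smul hF hM m), norm_smul,
    norm_ofNat] at hbound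
  have hratio : 3 * wallisIntegral m / ((m + 2) * (m + 4)) ≤
      6 * (wallisIntegral (m + 1) * ((m + 1 : ℕ) : ℝ)⁻¹ ^ 2) := by
    rw [inv_pow, ← div_eq_mul_inv, mul_div_assoc', div_le_div_iff₀ (by positivity) (by positivity)]
    push_cast
    exact mul_le_mul (by linarith [wallisIntegral_le_two_mul_succ m]) (by nlinarith)
      (by positivity) (by positivity)
  rw [norm_of_nonneg (by positivity : 0 ≤ wallisIntegral (m + 1) * ((m + 1 : ℕ) : ℝ)⁻¹ ^ 2)]
  linarith [mul_le_mul_of_nonneg_left hratio hK]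

end Laplace

/-! ### Initial data at `π / 2` -/

/-- The integrand `halfWeight b a` with its phase factor, centred at `π / 2`, whose `sin ^ n`-moment
gives the value of the Jacobi polynomial of degree `n` at `0`. -/
noncomputable def laplaceAmplitude (a b φ : ℝ) : ℂ :=
  halfWeight b a φ * Complex.exp (((a + b) / 2 * (φ - π / 2) : ℝ) * Complex.I)

theorem pi_div_two_mem_Ioo : π / 2 ∈ Ioo 0 π := ⟨pi_div_two_pos, half_lt_self pi_pos⟩

theorem sin_pi_div_two_div_two : sin (π / 2 / 2) = √2 / 2 := by
  rw [div_div, show (2 * 2 : ℝ) = 4 by norm_num, sin_pi_div_four]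

theorem cos_pi_div_two_div_two : cos (π / 2 / 2) = √2 / 2 := by
  rw [div_div, show (2 * 2 : ℝ) = 4 by norm_num, cos_pi_div_four]

theorem halfWeight_pi_div_two (p q : ℝ) : halfWeight p q (π / 2) = 2 ^ (-(p + q) / 2) := by
  have hsqrt : √2 / 2 = (2 : ℝ) ^ (-(1 / 2) : ℝ) := by
    rw [rpow_neg two_pos.le, ← sqrt_eq_rpow, sqrt_div_self']
    exact one_div _
  rw [halfWeight, sin_pi_div_two_div_two, cos_pi_div_two_div_two, hsqrt, ← rpow_mul two_pos.le,
    ← rpow_mul two_pos.le, ← rpow_add two_pos]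
  ring_nf

theorem halfCotTan_pi_div_two (p q : ℝ) : halfCotTan p q (π / 2) = (p - q) / 2 := by
  rw [halfCotTan, sin_pi_div_two_div_two, cos_pi_div_two_div_two, div_self (by positivity)]
  ring

theorem cscSecSq_pi_div_two (p q : ℝ) : cscSecSq p q (π / 2) = 2 * (p + q) := by
  rw [cscSecSq, sin_pi_div_two_div_two, cos_pi_div_two_div_two, div_pow, sq_sqrt two_pos.le]
  ring

theorem laplaceAmplitude_pi_div_two (a b : ℝ) :
    laplaceAmplitude a b (π / 2) = ((2 ^ (-(a + b) / 2) : ℝ) : ℂ) := by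
  rw [laplaceAmplitude, halfWeight_pi_div_two, sub_self, mul_zero, Complex.ofReal_zero, zero_mul,
    Complex.exp_zero, mul_one, add_comm b a]

theorem hasDerivAt_laplaceAmplitude (a b : ℝ) {φ : ℝ} (hφ : φ ∈ Ioo 0 π) :
    HasDerivAt (laplaceAmplitude a b)
      ((halfCotTan b a φ + (a + b) / 2 * Complex.I) * laplaceAmplitude a b φ) φ := by
  have hphase : HasDerivAt (fun φ => (a + b) / 2 * (φ - π / 2)) ((a + b) / 2) φ := by
    simpa using ((hasDerivAt_id φ).sub_const (π / 2)).const_mul ((a + b) / 2)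
  refine ((hasDerivAt_halfWeight b a hφ).ofReal_comp.mul
    ((hphase.ofReal_comp.mul_const Complex.I).cexp)).congr_deriv ?_
  rw [laplaceAmplitude]
  push_cast
  ring

theorem deriv_deriv_laplaceAmplitude (a b : ℝ) :
    deriv (deriv (laplaceAmplitude a b)) (π / 2) =
      (2 ^ (-(a + b) / 2) : ℝ) * (⟨-(a * b) - (a + b) / 2, (b ^ 2 - a ^ 2) / 2⟩ : ℂ) := by
  have hπ := pi_div_two_mem_Ioo
  have hderiv : deriv (laplaceAmplitude a b) =ᶠ[𝓝 (π / 2)] fun φ =>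
      (halfCotTan b a φ + (a + b) / 2 * Complex.I) * laplaceAmplitude a b φ := by
    filter_upwards [isOpen_Ioo.mem_nhds hπ] with φ hφ
    exact (hasDerivAt_laplaceAmplitude a b hφ).deriv
  have hderiv₂ := ((hasDerivAt_halfCotTan b a hπ).ofReal_comp.add_const
    ((a + b) / 2 * Complex.I)).mul (hasDerivAt_laplaceAmplitude a b hπ)
  refine hderiv.deriv_eq.trans (hderiv₂.deriv.trans ?_)
  rw [laplaceAmplitude_pi_div_two, halfCotTan_pi_div_two,
    cscSecSq_pi_div_two, Complex.mk_eq_add_mul_I]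
  push_cast
  linear_combination (((2 : ℝ) ^ (-(a + b) / 2) : ℝ) : ℂ) * ((a + b) / 2) ^ 2 * Complex.I_sq

theorem analyticAt_laplaceAmplitude (a b : ℝ) : AnalyticAt ℝ (laplaceAmplitude a b) (π / 2) := by
  have hπ := pi_div_two_mem_Ioo
  have hweight : ContDiffAt ℝ ⊤ (halfWeight b a) (π / 2) :=
    ((contDiff_sin.comp (contDiff_id.div_const 2)).contDiffAt.rpow_const_of_ne
      (sin_half_pos hπ).ne').mul
      ((contDiff_cos.comp (contDiff_id.div_const 2)).contDiffAt.rpow_const_of_ne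
      (cos_half_pos hπ).ne')
  have hphase : ContDiffAt ℝ ⊤
      (fun φ : ℝ => Complex.exp (((a + b) / 2 * (φ - π / 2) : ℝ) * Complex.I)) (π / 2) :=
    ((Complex.ofRealCLM.contDiff.comp (contDiff_const.mul (contDiff_id.sub contDiff_const))).mul
      contDiff_const).cexp.contDiffAt
  exact ContDiffAt.analyticAt ((Complex.ofRealCLM.contDiff.contDiffAt.comp _ hweight).mul hphase)

theorem measurable_laplaceAmplitude (a b : ℝ) : Measurable (laplaceAmplitude a b) := by
  unfold laplaceAmplitude halfWeight
  fun_prop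

theorem sin_mul_norm_laplaceAmplitude_le {a b : ℝ} (ha : -1 ≤ a) (hb : -1 ≤ b) {φ : ℝ}
    (hφ : φ ∈ Icc 0 π) : sin φ * ‖laplaceAmplitude a b φ‖ ≤ 2 := by
  rcases (sin_nonneg_of_mem_Icc hφ).eq_or_lt with hsin | hsin
  · rw [← hsin, zero_mul]
    exact two_pos.le
  have hφ' : φ ∈ Ioo 0 π := by
    refine ⟨hφ.1.lt_of_ne ?_, hφ.2.lt_of_ne ?_⟩ <;> rintro rfl <;> simp at hsin
  rw [laplaceAmplitude, norm_mul, Complex.norm_exp_ofReal_mul_I, mul_one, Complex.norm_real,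
    norm_of_nonneg (halfWeight_pos b a hφ').le]
  calc sin φ * halfWeight b a φ = 2 * halfWeight (b + 1) (a + 1) φ := by
        rw [halfWeight_add b a 1 1 hφ', halfWeight_one_one]
        ring
    _ ≤ 2 * (1 * 1) := by
        unfold halfWeight
        gcongr
        · exact rpow_nonneg (cos_half_pos hφ').le _
        · exact rpow_le_one (sin_half_pos hφ').le (sin_le_one _) (by linarith)
        · exact rpow_le_one (cos_half_pos hφ').le (cos_le_one _) (by linarith)
    _ = 2 := by norm_num

theorem isBigO_laplaceAmplitude_add_sub (a b : ℝ) :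
    (fun φ => laplaceAmplitude a b φ + laplaceAmplitude a b (π - φ) -
      (2 : ℝ) • laplaceAmplitude a b (π / 2) -
      cos φ ^ 2 • deriv (deriv (laplaceAmplitude a b)) (π / 2)) =O[𝓝 (π / 2)]
      fun φ => cos φ ^ 4 := by
  have hsq := (isBigO_sq_sub_sin_sq.smul (isBigO_refl (fun _ : ℝ =>
    deriv (deriv (laplaceAmplitude a b)) (π / 2)) (𝓝 0)))
  have hsum := (isBigO_add_sub_two_smul_of_analyticAt (analyticAt_laplaceAmplitude a b)).add
    (hsq.trans (isBigO_of_le' (c := ‖deriv (deriv (laplaceAmplitude a b)) (π / 2)‖) _ fun x => by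
      rw [norm_smul, mul_comm]))
  have hsin : (fun x : ℝ => x ^ 4) =O[𝓝 0] fun x => sin x ^ 4 :=
    isEquivalent_sin.isBigO_symm.pow 4
  have hshift : Tendsto (fun φ => φ - π / 2) (𝓝 (π / 2)) (𝓝 0) := by
    simpa using (continuous_sub_right (π / 2)).tendsto (π / 2)
  refine ((hsum.trans hsin).comp_tendsto hshift).congr (fun φ => ?_) fun φ => ?_
  · simp only [Function.comp, sin_sub_pi_div_two, add_sub_cancel]
    rw [show π / 2 - (φ - π / 2) = π - φ by ring]
    module
  · simp only [Function.comp, sin_sub_pi_div_two, (show Even 4 by decide).neg_pow]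

theorem isBigO_integral_sin_pow_smul_laplaceAmplitude_sub {a b : ℝ} (ha : -1 ≤ a) (hb : -1 ≤ b) :
    (fun n : ℕ => (∫ φ in 0..π, sin φ ^ n • laplaceAmplitude a b φ) -
      wallisIntegral n • (laplaceAmplitude a b (π / 2) +
        (2 * (n + 2) : ℝ)⁻¹ • deriv (deriv (laplaceAmplitude a b)) (π / 2))) =O[atTop]
      fun n : ℕ => wallisIntegral n * (n : ℝ)⁻¹ ^ 2 :=
  isBigO_integral_sin_pow_smul_sub (measurable_laplaceAmplitude a b).aestronglyMeasurable
    (fun _ hφ => sin_mul_norm_laplaceAmplitude_le ha hb hφ) (isBigO_laplaceAmplitude_add_sub a b)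

/-- The phase of the leading oscillation of `jacobiLiouville a b n` at `π / 2`. -/
noncomputable def midpointPhase (a b : ℝ) (n : ℕ) : ℝ := n * π / 2 + (b - a) * π / 4

theorem pi_mul_jacobiSum_zero_eq_re {a b : ℝ} (ha : -1 < a) (hb : -1 < b) {n : ℕ} (hn : 1 ≤ n) :
    π * jacobiSum (n + a) (n + b) n 0 = 2 ^ (a + b) *
      (Complex.exp ((-midpointPhase a b n : ℝ) * Complex.I) *
        ∫ φ in 0..π, sin φ ^ n • laplaceAmplitude a b φ).re := by
  obtain ⟨m, rfl⟩ := Nat.exists_eq_add_of_le' hn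
  have hint := intervalIntegrable_sin_pow_smul
    (measurable_laplaceAmplitude a b).aestronglyMeasurable
    (fun _ hφ => sin_mul_norm_laplaceAmplitude_le ha.le hb.le hφ) m
  rw [pi_mul_jacobiSum_zero ha hb hn, ← intervalIntegral.integral_const_mul,
    ← Complex.reCLM_apply, ← Complex.reCLM.intervalIntegral_comp_comm (hint.const_mul _),
    intervalIntegral.integral_of_le pi_pos.le, integral_Ioc_eq_integral_Ioo]
  congr 2 with φ
  have hphase : (a + b) * φ / 2 - ((m + 1 : ℕ) + b) * π / 2 =
      -midpointPhase a b (m + 1) + (a + b) / 2 * (φ - π / 2) := by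
    rw [midpointPhase]
    ring
  have hexp : Complex.exp ((-midpointPhase a b (m + 1) : ℝ) * Complex.I) *
      (sin φ ^ (m + 1) • laplaceAmplitude a b φ) =
      ((sin φ ^ (m + 1) * halfWeight b a φ : ℝ) : ℂ) *
        Complex.exp (((a + b) * φ / 2 - ((m + 1 : ℕ) + b) * π / 2 : ℝ) * Complex.I) := by
    rw [hphase, Complex.ofReal_add, add_mul, Complex.exp_add, laplaceAmplitude, Complex.real_smul,
      Complex.ofReal_mul (sin φ ^ (m + 1))]
    ring
  rw [Complex.reCLM_apply, hexp, Complex.re_ofReal_mul, Complex.exp_ofReal_mul_I_re, mul_assoc]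

theorem isBigO_pi_mul_jacobiSum_zero_sub {a b : ℝ} (ha : -1 < a) (hb : -1 < b) :
    (fun n : ℕ => π * 2 ^ (-(a + b) / 2) * jacobiSum (n + a) (n + b) n 0 -
      wallisIntegral n * (cos (midpointPhase a b n) + (2 * (n + 2) : ℝ)⁻¹ *
        ((-(a * b) - (a + b) / 2) * cos (midpointPhase a b n) +
          (b ^ 2 - a ^ 2) / 2 * sin (midpointPhase a b n)))) =O[atTop]
      fun n : ℕ => wallisIntegral n * (n : ℝ)⁻¹ ^ 2 := by
  refine IsBigO.trans (IsBigO.of_bound (2 ^ ((a + b) / 2)) ?_)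
    (isBigO_integral_sin_pow_smul_laplaceAmplitude_sub ha.le hb.le)
  filter_upwards [eventually_ge_atTop 1] with n hn
  have hpow : (2 : ℝ) ^ (-(a + b) / 2) * 2 ^ (a + b) = 2 ^ ((a + b) / 2) := by
    rw [← rpow_add two_pos]
    ring_nf
  have hpow' : (2 : ℝ) ^ ((a + b) / 2) * 2 ^ (-(a + b) / 2) = 1 := by
    rw [← rpow_add two_pos, neg_div, add_neg_cancel, rpow_zero]
  set I := ∫ φ in 0..π, sin φ ^ n • laplaceAmplitude a b φ
  have hI : π * 2 ^ (-(a + b) / 2) * jacobiSum (n + a) (n + b) n 0 = 2 ^ ((a + b) / 2) *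
      (Complex.exp ((-midpointPhase a b n : ℝ) * Complex.I) * I).re := by
    rw [mul_right_comm, pi_mul_jacobiSum_zero_eq_re ha hb hn, ← hpow]
    ring
  have hmain : ((Complex.exp ((-midpointPhase a b n : ℝ) * Complex.I)) * wallisIntegral n •
      (laplaceAmplitude a b (π / 2) +
        (2 * (n + 2) : ℝ)⁻¹ • deriv (deriv (laplaceAmplitude a b)) (π / 2))).re =
      2 ^ (-(a + b) / 2) * (wallisIntegral n * (cos (midpointPhase a b n) +
        (2 * (n + 2) : ℝ)⁻¹ * ((-(a * b) - (a + b) / 2) * cos (midpointPhase a b n) +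
          (b ^ 2 - a ^ 2) / 2 * sin (midpointPhase a b n)))) := by
    rw [deriv_deriv_laplaceAmplitude, laplaceAmplitude_pi_div_two]
    simp only [Complex.real_smul, Complex.mul_re, Complex.mul_im, Complex.add_re, Complex.add_im,
      Complex.ofReal_re, Complex.ofReal_im, Complex.exp_ofReal_mul_I_re,
      Complex.exp_ofReal_mul_I_im, cos_neg, sin_neg]
    ring
  rw [hI, ← one_mul (wallisIntegral n * (cos _ + _)), ← hpow', mul_assoc, ← hmain, ← mul_sub,
    ← Complex.sub_re, ← mul_sub, norm_mul, norm_of_nonneg (by positivity), norm_eq_abs]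
  gcongr
  refine (Complex.abs_re_le_norm _).trans_eq ?_
  rw [norm_mul, Complex.norm_exp_ofReal_mul_I, one_mul]

/-- The amplitude correction `F` with `F' = -V / 2` for `V = jacobiPotential a b`. -/
noncomputable def jacobiCorrection (a b : ℝ) : ℝ → ℝ :=
  halfCotTan (2 * ((1 / 4 - a ^ 2) / 4)) (2 * ((1 / 4 - b ^ 2) / 4))

/-- The two-term approximation to `√(π N) * jacobiLiouville a b n`, where
`N = shiftedDegree a b n`. -/
noncomputable def jacobiWKB (a b : ℝ) : ℝ → ℝ → ℝ :=
  wkbApprox (jacobiCorrection a b) (a * b / 2) (a * π / 2 + π / 4)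

/-- The derivative of `jacobiWKB`. -/
noncomputable def jacobiWKBDeriv (a b : ℝ) : ℝ → ℝ → ℝ :=
  wkbDeriv (jacobiCorrection a b) (jacobiPotential a b) (a * b / 2) (a * π / 2 + π / 4)

/-- The normalised error of the two-term approximation to the Jacobi polynomial of degree `n`. -/
noncomputable def jacobiError (a b : ℝ) (n : ℕ) (θ : ℝ) : ℝ :=
  √(π * shiftedDegree a b n) * jacobiLiouville a b n θ - jacobiWKB a b (shiftedDegree a b n) θ

theorem hasDerivAt_jacobiCorrection (a b : ℝ) {θ : ℝ} (hθ : θ ∈ Ioo 0 π) :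
    HasDerivAt (jacobiCorrection a b) (-(jacobiPotential a b θ / 2)) θ := by
  refine (hasDerivAt_halfCotTan _ _ hθ).congr_deriv ?_
  simp only [jacobiPotential, cscSecSq]
  ring

theorem shiftedDegree_add_one_add_one (a b : ℝ) (n : ℕ) :
    shiftedDegree (a + 1) (b + 1) n = shiftedDegree a b (n + 1) := by
  rw [shiftedDegree, shiftedDegree]
  push_cast
  ring

theorem shiftedDegree_mul_pi_div_two_sub (a b : ℝ) (n : ℕ) :
    shiftedDegree a b n * (π / 2) - (a * π / 2 + π / 4) = midpointPhase a b n := by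
  rw [shiftedDegree, midpointPhase]
  ring

theorem midpointPhase_add_one_add_one (a b : ℝ) (n : ℕ) :
    midpointPhase (a + 1) (b + 1) n = midpointPhase a b (n + 1) - π / 2 := by
  rw [midpointPhase, midpointPhase]
  push_cast
  ring

theorem jacobiCorrection_pi_div_two (a b : ℝ) :
    jacobiCorrection a b (π / 2) = (b ^ 2 - a ^ 2) / 4 := by
  rw [jacobiCorrection, halfCotTan_pi_div_two]
  ring

theorem jacobiWKB_pi_div_two (a b : ℝ) (n : ℕ) :
    jacobiWKB a b (shiftedDegree a b n) (π / 2) = cos (midpointPhase a b n) +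
      (shiftedDegree a b n)⁻¹ * ((b ^ 2 - a ^ 2) / 4 * sin (midpointPhase a b n) -
        a * b / 2 * cos (midpointPhase a b n)) := by
  rw [jacobiWKB, wkbApprox, shiftedDegree_mul_pi_div_two_sub, jacobiCorrection_pi_div_two]

theorem sqrt_mul_jacobiLiouville_pi_div_two (a b N : ℝ) (n : ℕ) :
    √(π * N) * jacobiLiouville a b n (π / 2) =
      √(N / (2 * π)) * (π * 2 ^ (-(a + b) / 2) * jacobiSum (n + a) (n + b) n 0) := by
  have hsqrt : √(π * N) = √2 * π * √(N / (2 * π)) := by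
    rw [show π * N = 2 * π ^ 2 * (N / (2 * π)) by field_simp, sqrt_mul (by positivity),
      sqrt_mul two_pos.le, sqrt_sq pi_pos.le]
  have hpow : (2 : ℝ) ^ (-(a + b) / 2) = √2 * 2 ^ (-(a + 1 / 2 + (b + 1 / 2)) / 2) := by
    rw [sqrt_eq_rpow, ← rpow_add two_pos]
    ring_nf
  rw [jacobiLiouville, halfWeight_pi_div_two, cos_pi_div_two, hpow, hsqrt]
  ring

theorem isBigO_mul_cos_add_mul_sin (p q : ℝ) (f : ℕ → ℝ) :
    (fun n => p * cos (f n) + q * sin (f n)) =O[atTop] fun _ => (1 : ℝ) := by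
  refine .add (.const_mul_left (.of_bound' ?_) p) (.const_mul_left (.of_bound' ?_) q) <;>
    refine .of_forall fun n => ?_
  · simpa using abs_cos_le_one _
  · simpa using abs_sin_le_one _

theorem isBigO_inv_shiftedDegree (a b : ℝ) :
    (fun n => (shiftedDegree a b n)⁻¹) =O[atTop] fun n : ℕ => (n : ℝ)⁻¹ := by
  simpa only [add_zero, shiftedDegree] using isBigO_inv_natCast_add ((a + b + 1) / 2) 0

theorem isBigO_inv_natCast_add_sub (c d : ℝ) :
    (fun n : ℕ => ((n : ℝ) + c)⁻¹ - ((n : ℝ) + d)⁻¹) =O[atTop] fun n : ℕ => (n : ℝ)⁻¹ ^ 2 := by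
  have hinv (c : ℝ) : (fun n : ℕ => ((n : ℝ) + c)⁻¹) =O[atTop] fun n : ℕ => (n : ℝ)⁻¹ := by
    simpa only [add_zero] using isBigO_inv_natCast_add c 0
  have hne (c : ℝ) : ∀ᶠ n : ℕ in atTop, (n : ℝ) + c ≠ 0 :=
    (tendsto_atTop_add_const_right _ c tendsto_natCast_atTop_atTop).eventually_ne_atTop 0
  refine (((hinv c).mul (hinv d)).const_mul_left (d - c)).congr' ?_
    (.of_forall fun n => (sq _).symm)
  filter_upwards [hne c, hne d] with n hc hd
  field_simp
  ring

theorem isBigO_sqrt_mul_wallisIntegral_sub_shiftedDegree (a b : ℝ) :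
    (fun n => √(shiftedDegree a b n / (2 * π)) * wallisIntegral n -
      (1 + (a + b) / 4 * (shiftedDegree a b n)⁻¹)) =O[atTop] fun n : ℕ => (n : ℝ)⁻¹ ^ 2 := by
  refine (isBigO_sqrt_mul_wallisIntegral_sub ((a + b) / 2)).congr_left fun n => ?_
  rw [show (n + (a + b) / 2 + 1 / 2 : ℝ) = shiftedDegree a b n by rw [shiftedDegree]; ring]
  ring

theorem isBigO_jacobiError_pi_div_two {a b : ℝ} (ha : -1 < a) (hb : -1 < b) :
    (fun n => jacobiError a b n (π / 2)) =O[atTop] fun n : ℕ => (n : ℝ)⁻¹ ^ 2 := by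
  set A : ℕ → ℝ := fun n => √(shiftedDegree a b n / (2 * π)) * wallisIntegral n with hA
  set C : ℕ → ℝ := fun n => cos (midpointPhase a b n) with hC
  set T : ℕ → ℝ := fun n => (-(a * b) - (a + b) / 2) * cos (midpointPhase a b n) +
    (b ^ 2 - a ^ 2) / 2 * sin (midpointPhase a b n) with hT
  have hA₂ := isBigO_sqrt_mul_wallisIntegral_sub_shiftedDegree a b
  have hinv := isBigO_inv_shiftedDegree a b
  have hone : (fun n : ℕ => (n : ℝ)⁻¹) =O[atTop] fun _ => (1 : ℝ) :=
    tendsto_inv_atTop_nhds_zero_nat.isBigO_one ℝ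
  have hA₁ : (fun n => A n - 1) =O[atTop] fun n : ℕ => (n : ℝ)⁻¹ := by
    refine ((hA₂.trans ?_).add (hinv.const_mul_left ((a + b) / 4))).congr_left fun n => by ring
    simpa only [sq, mul_one] using (isBigO_refl (fun n : ℕ => (n : ℝ)⁻¹) atTop).mul hone
  have hA₀ : A =O[atTop] fun _ => (1 : ℝ) := by
    simpa using (hA₁.trans hone).add (isBigO_refl (fun _ => (1 : ℝ)) atTop)
  have hC₀ : C =O[atTop] fun _ => (1 : ℝ) := by
    simpa using isBigO_mul_cos_add_mul_sin 1 0 (midpointPhase a b)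
  have hT₀ : T =O[atTop] fun _ => (1 : ℝ) := isBigO_mul_cos_add_mul_sin _ _ _
  have hinv₂ : (fun n : ℕ => (n + 2 : ℝ)⁻¹) =O[atTop] fun n : ℕ => (n : ℝ)⁻¹ := by
    simpa only [add_zero] using isBigO_inv_natCast_add 2 0
  have hlaplace := ((isBigO_refl (fun n => √(shiftedDegree a b n / (2 * π))) atTop).mul
    (isBigO_pi_mul_jacobiSum_zero_sub ha hb)).congr_right (g₂ := fun n => A n * (n : ℝ)⁻¹ ^ 2)
    fun n => (mul_assoc _ _ _).symm
  have hsum := (((hlaplace.trans (hA₀.mul (isBigO_refl _ _))).congr_right fun n => one_mul _).add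
    ((hA₂.mul hC₀).congr_right fun n => mul_one _)).add
    (((hA₁.mul ((hinv₂.mul hT₀).congr_right fun n => mul_one _)).congr_right
      fun n => (sq _).symm).const_mul_left (1 / 2)) |>.add
    ((((isBigO_inv_natCast_add_sub 2 ((a + b + 1) / 2)).mul hT₀).congr_right
      fun n => mul_one _).const_mul_left (1 / 2))
  refine hsum.congr_left fun n => ?_
  rw [jacobiError, sqrt_mul_jacobiLiouville_pi_div_two, jacobiWKB_pi_div_two]
  simp only [hA, hC, hT, mul_inv, shiftedDegree]
  ring

theorem jacobiWKBDeriv_pi_div_two (a b : ℝ) (n : ℕ) :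
    jacobiWKBDeriv a b (shiftedDegree a b n) (π / 2) =
      -shiftedDegree a b n * sin (midpointPhase a b n) +
        (b ^ 2 - a ^ 2) / 4 * cos (midpointPhase a b n) + a * b / 2 * sin (midpointPhase a b n) -
        (shiftedDegree a b n)⁻¹ *
          ((1 / 2 - a ^ 2 - b ^ 2) / 4 * sin (midpointPhase a b n)) := by
  rw [jacobiWKBDeriv, wkbDeriv, shiftedDegree_mul_pi_div_two_sub, jacobiCorrection_pi_div_two,
    jacobiPotential, cscSecSq_pi_div_two]
  ring

theorem deriv_jacobiLiouville_succ_pi_div_two (a b : ℝ) (n : ℕ) :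
    deriv (jacobiLiouville a b (n + 1)) (π / 2) =
      (a - b) / 2 * jacobiLiouville a b (n + 1) (π / 2) -
        (shiftedDegree a b (n + 1) + (a + b + 1) / 2) *
          jacobiLiouville (a + 1) (b + 1) n (π / 2) := by
  rw [(hasDerivAt_jacobiLiouville_succ a b n pi_div_two_mem_Ioo).deriv, halfCotTan_pi_div_two,
    shiftedDegree]
  push_cast
  ring

theorem shiftedDegree_succ_pos {a b : ℝ} (h : -3 < a + b) (n : ℕ) :
    0 < shiftedDegree a b (n + 1) := by
  rw [shiftedDegree]
  push_cast
  linarith [n.cast_nonneg (α := ℝ)]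

theorem hasDerivAt_jacobiError_succ {a b : ℝ} (h : -3 < a + b) (n : ℕ) {θ : ℝ}
    (hθ : θ ∈ Ioo 0 π) :
    HasDerivAt (jacobiError a b (n + 1))
      (√(π * shiftedDegree a b (n + 1)) * deriv (jacobiLiouville a b (n + 1)) θ -
        jacobiWKBDeriv a b (shiftedDegree a b (n + 1)) θ) θ :=
  ((hasDerivAt_jacobiLiouville_succ a b n hθ).differentiableAt.hasDerivAt.const_mul _).sub
    (hasDerivAt_wkbApprox _ _ (shiftedDegree_succ_pos h n).ne' (hasDerivAt_jacobiCorrection a b hθ))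

theorem hasDerivAt_deriv_jacobiError_succ {a b : ℝ} (h : -3 < a + b) (n : ℕ) {θ : ℝ}
    (hθ : θ ∈ Ioo 0 π) :
    HasDerivAt (deriv (jacobiError a b (n + 1)))
      (-(shiftedDegree a b (n + 1) ^ 2 + jacobiPotential a b θ) * jacobiError a b (n + 1) θ -
        (shiftedDegree a b (n + 1))⁻¹ *
          ((jacobiPotential a b θ * jacobiCorrection a b θ - deriv (jacobiPotential a b) θ / 2) *
            sin (shiftedDegree a b (n + 1) * θ - (a * π / 2 + π / 4)) -
          jacobiPotential a b θ * (a * b / 2) *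
            cos (shiftedDegree a b (n + 1) * θ - (a * π / 2 + π / 4)))) θ := by
  have hderiv : deriv (jacobiError a b (n + 1)) =ᶠ[𝓝 θ] fun θ =>
      √(π * shiftedDegree a b (n + 1)) * deriv (jacobiLiouville a b (n + 1)) θ -
        jacobiWKBDeriv a b (shiftedDegree a b (n + 1)) θ := by
    filter_upwards [isOpen_Ioo.mem_nhds hθ] with t ht
    exact (hasDerivAt_jacobiError_succ h n ht).deriv
  refine HasDerivAt.congr_of_eventuallyEq (HasDerivAt.congr_deriv
    (((hasDerivAt_deriv_jacobiLiouville a b n hθ).const_mul _).sub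
      (hasDerivAt_wkbDeriv _ _ (shiftedDegree_succ_pos h n).ne' (hasDerivAt_jacobiCorrection a b hθ)
        (hasDerivAt_cscSecSq _ _ hθ).differentiableAt.hasDerivAt)) ?_) hderiv
  simp only [jacobiError, jacobiWKB, jacobiPotential]
  ring

theorem isBigO_jacobiWKB_pi_div_two_sub_jacobiWKBDeriv {a b : ℝ} (h : -3 < a + b) :
    (fun n : ℕ => (a - b) / 2 * jacobiWKB a b (shiftedDegree a b (n + 1)) (π / 2) -
      (shiftedDegree a b (n + 1) + (a + b + 1) / 2) *
        jacobiWKB (a + 1) (b + 1) (shiftedDegree (a + 1) (b + 1) n) (π / 2) -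
      jacobiWKBDeriv a b (shiftedDegree a b (n + 1)) (π / 2)) =O[atTop]
      fun n : ℕ => (shiftedDegree a b (n + 1))⁻¹ := by
  refine ((isBigO_refl (fun n => (shiftedDegree a b (n + 1))⁻¹) atTop).mul
    (isBigO_mul_cos_add_mul_sin
      (-((a - b) / 2 * (a * b / 2)) + (a + b + 1) / 2 * ((b ^ 2 - a ^ 2) / 4 + (b - a) / 2))
      ((a - b) / 2 * ((b ^ 2 - a ^ 2) / 4) + (a + b + 1) / 2 * ((a + 1) * (b + 1) / 2) +
        (1 / 2 - a ^ 2 - b ^ 2) / 4)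
      fun n => midpointPhase a b (n + 1))).congr (fun n => ?_) fun n => mul_one _
  have hne := (shiftedDegree_succ_pos h n).ne'
  rw [jacobiWKB_pi_div_two, jacobiWKB_pi_div_two, jacobiWKBDeriv_pi_div_two,
    shiftedDegree_add_one_add_one, midpointPhase_add_one_add_one, sin_sub_pi_div_two,
    cos_sub_pi_div_two]
  field_simp
  ring

theorem isBigO_inv_shiftedDegree_succ (a b : ℝ) :
    (fun n : ℕ => (n : ℝ)⁻¹) =O[atTop] fun n : ℕ => (shiftedDegree a b (n + 1))⁻¹ := by
  refine (isBigO_inv_natCast_add 0 (1 + (a + b + 1) / 2)).congr (fun n => by rw [add_zero])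
    fun n => ?_
  rw [shiftedDegree, Nat.cast_add_one, ← add_assoc (n : ℝ)]

theorem isBigO_jacobiError_succ_pi_div_two {a b : ℝ} (ha : -1 < a) (hb : -1 < b) :
    (fun n : ℕ => jacobiError a b (n + 1) (π / 2)) =O[atTop]
      fun n : ℕ => (shiftedDegree a b (n + 1))⁻¹ ^ 2 := by
  have hshift := ((isBigO_inv_natCast_add 1 0).congr_right fun n => by rw [add_zero]).trans
    (isBigO_inv_shiftedDegree_succ a b)
  refine ((isBigO_jacobiError_pi_div_two ha hb).comp_tendsto
    (tendsto_add_atTop_nat 1)).trans ((hshift.pow 2).congr_left fun n => ?_)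
  simp only [Function.comp_apply, Nat.cast_add_one]

theorem isBigO_deriv_jacobiError_succ_pi_div_two {a b : ℝ} (ha : -1 < a) (hb : -1 < b) :
    (fun n : ℕ => deriv (jacobiError a b (n + 1)) (π / 2)) =O[atTop]
      fun n : ℕ => (shiftedDegree a b (n + 1))⁻¹ := by
  have hone : (fun n : ℕ => (shiftedDegree a b (n + 1))⁻¹) =O[atTop] fun _ => (1 : ℝ) :=
    ((isBigO_inv_shiftedDegree a b).comp_tendsto (tendsto_add_atTop_nat 1)).trans
      ((tendsto_inv_atTop_nhds_zero_nat.isBigO_one ℝ).comp_tendsto (tendsto_add_atTop_nat 1))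
  have hsq : (fun n : ℕ => (shiftedDegree a b (n + 1))⁻¹ ^ 2) =O[atTop]
      fun n : ℕ => (shiftedDegree a b (n + 1))⁻¹ :=
    ((isBigO_refl _ _).mul hone).congr (fun n => (sq _).symm) fun n => mul_one _
  have hvalue := ((isBigO_jacobiError_succ_pi_div_two ha hb).trans hsq).const_mul_left
    ((a - b) / 2)
  have hvalue' := (isBigO_jacobiError_pi_div_two (a := a + 1) (b := b + 1) (by linarith)
    (by linarith)).trans ((isBigO_inv_shiftedDegree_succ a b).pow 2)
  have hdegree : (fun n : ℕ => (shiftedDegree a b (n + 1) + (a + b + 1) / 2) *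
      (shiftedDegree a b (n + 1))⁻¹ ^ 2) =O[atTop] fun n => (shiftedDegree a b (n + 1))⁻¹ := by
    refine ((isBigO_refl _ _).add (hsq.const_mul_left ((a + b + 1) / 2))).congr_left fun n => ?_
    have := (shiftedDegree_succ_pos (by linarith) n : 0 < shiftedDegree a b (n + 1)).ne'
    field_simp
  refine ((hvalue.sub (((isBigO_refl _ _).mul hvalue').trans hdegree)).add
    (isBigO_jacobiWKB_pi_div_two_sub_jacobiWKBDeriv (a := a) (b := b)
      (by linarith))).congr_left fun n => ?_
  rw [(hasDerivAt_jacobiError_succ (by linarith) n pi_div_two_mem_Ioo).deriv, jacobiError,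
    jacobiError, deriv_jacobiLiouville_succ_pi_div_two, shiftedDegree_add_one_add_one]
  ring

/-! ### Uniform error bound -/

theorem exists_jacobiError_pi_div_two_bound {a b : ℝ} (ha : -1 < a) (hb : -1 < b) :
    ∃ K, 0 < K ∧ ∀ n : ℕ,
      |jacobiError a b (n + 1) (π / 2)| ≤ K / shiftedDegree a b (n + 1) ^ 2 ∧
      |deriv (jacobiError a b (n + 1)) (π / 2)| ≤ K / shiftedDegree a b (n + 1) := by
  have hpos := shiftedDegree_succ_pos (show -3 < a + b by linarith)
  have hinv (n : ℕ) : 0 < (shiftedDegree a b (n + 1))⁻¹ := inv_pos.2 (hpos n)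
  obtain ⟨K₁, hK₁, hvalue⟩ := bound_of_isBigO_nat_atTop
    (isBigO_jacobiError_succ_pi_div_two ha hb)
  obtain ⟨K₂, -, hderiv⟩ := bound_of_isBigO_nat_atTop
    (isBigO_deriv_jacobiError_succ_pi_div_two ha hb)
  refine ⟨max K₁ K₂, lt_max_of_lt_left hK₁, fun n => ⟨?_, ?_⟩⟩
  · refine (hvalue (pow_pos (hinv n) 2).ne').trans ?_
    rw [norm_of_nonneg (pow_pos (hinv n) 2).le, div_eq_mul_inv, inv_pow]
    have := hpos n
    gcongr
    exact le_max_left _ _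
  · refine (hderiv (hinv n).ne').trans ?_
    rw [norm_of_nonneg (hinv n).le, div_eq_mul_inv]
    have := hpos n
    gcongr
    exact le_max_right _ _

theorem exists_jacobiError_ode_bound (a b : ℝ) (h : -3 < a + b) {ε : ℝ} (hε : 0 < ε) :
    ∃ K, 0 < K ∧ ∀ n : ℕ, ∀ t ∈ Ioc 0 (π - ε),
      |deriv (deriv (jacobiError a b (n + 1))) t +
        shiftedDegree a b (n + 1) ^ 2 * jacobiError a b (n + 1) t| ≤
      K / t ^ 2 * |jacobiError a b (n + 1) t| + K / (shiftedDegree a b (n + 1) * t ^ 3) := by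
  obtain ⟨K, hK, hbound⟩ :=
    exists_wkb_residual_bound ((1 / 4 - a ^ 2) / 4) ((1 / 4 - b ^ 2) / 4) (a * b / 2) hε
  refine ⟨K, hK, fun n t ht => ?_⟩
  obtain ⟨hV, hresidual⟩ := hbound t ht
  have hN := shiftedDegree_succ_pos h n
  rw [(hasDerivAt_deriv_jacobiError_succ h n ⟨ht.1, by linarith [ht.2]⟩).deriv]
  generalize shiftedDegree a b (n + 1) = N at hN ⊢
  specialize hresidual (N * t - (a * π / 2 + π / 4))
  calc _ = |-(jacobiPotential a b t * jacobiError a b (n + 1) t) - N⁻¹ *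
        ((jacobiPotential a b t * jacobiCorrection a b t - deriv (jacobiPotential a b) t / 2) *
          sin (N * t - (a * π / 2 + π / 4)) - jacobiPotential a b t * (a * b / 2) *
            cos (N * t - (a * π / 2 + π / 4)))| := by ring_nf
    _ ≤ K / t ^ 2 * |jacobiError a b (n + 1) t| + N⁻¹ * (K / t ^ 3) := by
        refine (abs_sub _ _).trans (add_le_add ?_ ?_)
        · rw [abs_neg, abs_mul]
          gcongr
          exact hV
        · rw [abs_mul, abs_of_pos (inv_pos.2 hN)]
          gcongr
          exact hresidual
    _ = _ := by field_simp

theorem abs_le_of_energy_le {N θ T w v w₀ v₀ D K : ℝ} (hN : 0 < N) (hθ : 0 < θ) (hθT : θ ≤ T)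
    (hD : 0 ≤ D) (hw₀ : |w₀| ≤ K / N ^ 2) (hv₀ : |v₀| ≤ K / N)
    (hE : N ^ 2 * w ^ 2 + v ^ 2 + 1 / (N ^ 2 * θ ^ 4) ≤
      D * (N ^ 2 * w₀ ^ 2 + v₀ ^ 2 + 1 / (N ^ 2 * θ ^ 4))) :
    |w| ≤ √(D * (2 * K ^ 2 * T ^ 4 + 1)) / (N ^ 2 * θ ^ 2) := by
  refine abs_le_of_sq_le_sq ?_ (by positivity)
  rw [div_pow, sq_sqrt (by positivity), le_div_iff₀ (by positivity)]
  have hw₀' : N ^ 2 * w₀ ^ 2 ≤ K ^ 2 / N ^ 2 := by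
    calc N ^ 2 * w₀ ^ 2 = N ^ 2 * |w₀| ^ 2 := by rw [sq_abs]
      _ ≤ N ^ 2 * (K / N ^ 2) ^ 2 := by gcongr
      _ = K ^ 2 / N ^ 2 := by field_simp
  have hv₀' : v₀ ^ 2 ≤ K ^ 2 / N ^ 2 := by
    rw [← sq_abs v₀, ← div_pow]
    gcongr
  calc w ^ 2 * (N ^ 2 * θ ^ 2) ^ 2 = N ^ 2 * θ ^ 4 * (N ^ 2 * w ^ 2) := by ring
    _ ≤ N ^ 2 * θ ^ 4 * (D * (K ^ 2 / N ^ 2 + K ^ 2 / N ^ 2 + 1 / (N ^ 2 * θ ^ 4))) := by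
        gcongr N ^ 2 * θ ^ 4 * ?_
        calc N ^ 2 * w ^ 2 ≤ N ^ 2 * w ^ 2 + v ^ 2 + 1 / (N ^ 2 * θ ^ 4) := by
              rw [add_assoc]
              exact le_add_of_nonneg_right (by positivity)
          _ ≤ D * (N ^ 2 * w₀ ^ 2 + v₀ ^ 2 + 1 / (N ^ 2 * θ ^ 4)) := hE
          _ ≤ _ := by gcongr
    _ = D * (2 * K ^ 2 * θ ^ 4 + 1) := by
        field_simp
        ring
    _ ≤ _ := by gcongr

theorem exists_abs_jacobiError_le {a b : ℝ} (ha : -1 < a) (hb : -1 < b) {c ε : ℝ} (hc : 0 < c)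
    (hε : 0 < ε) : ∃ C, 0 < C ∧ ∀ n : ℕ, ∀ θ ∈ Ioc 0 (π - ε), c ≤ shiftedDegree a b (n + 1) * θ →
      |jacobiError a b (n + 1) θ| ≤ C / (shiftedDegree a b (n + 1) ^ 2 * θ ^ 2) := by
  have h : -3 < a + b := by linarith
  obtain ⟨K, hK, hode⟩ := exists_jacobiError_ode_bound a b h (lt_min hε pi_div_two_pos)
  obtain ⟨K₀, -, hmid⟩ := exists_jacobiError_pi_div_two_bound ha hb
  refine ⟨√(exp (2 * K * (1 + 1 / c)) * (2 * K₀ ^ 2 * π ^ 4 + 1)), by positivity,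
    fun n θ hθ hcθ => ?_⟩
  have hmem : ∀ t ∈ uIcc θ (π / 2), t ∈ Ioc 0 (π - min ε (π / 2)) := fun t ht =>
    ⟨(lt_min hθ.1 pi_div_two_pos).trans_le ht.1, ht.2.trans (max_le
      (hθ.2.trans (sub_le_sub_left (min_le_left _ _) _))
      (by linarith [min_le_right ε (π / 2)]))⟩
  have hmem' : ∀ t ∈ uIcc θ (π / 2), t ∈ Ioo 0 π := fun t ht =>
    ⟨(hmem t ht).1, (hmem t ht).2.trans_lt (sub_lt_self _ (lt_min hε pi_div_two_pos))⟩
  have hN := shiftedDegree_succ_pos h n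
  have hθπ : θ ≤ π := by linarith [hθ.2]
  refine abs_le_of_energy_le hN hθ.1 hθπ (exp_pos _).le (hmid n).1 (hmid n).2
    (energy_le_exp_mul_energy hN hK.le hc hθ.1 hcθ (by linarith)
      (fun t ht => (hasDerivAt_jacobiError_succ h n (hmem' t ht)).differentiableAt.hasDerivAt)
      (fun t ht =>
        (hasDerivAt_deriv_jacobiError_succ h n (hmem' t ht)).differentiableAt.hasDerivAt)
      fun t ht => hode n t (hmem t ht))

theorem F2fn_eq_jacobiCorrection (a b : ℝ) {θ : ℝ} (hθ : θ ∈ Ioo 0 π) :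
    F2fn a b θ = jacobiCorrection a b θ := by
  have hs := (sin_half_pos hθ).ne'
  have hc := (cos_half_pos hθ).ne'
  rw [F2fn, jacobiCorrection, halfCotTan, sin_eq_two_mul_half, cos_eq_sq_sub_sq_half,
    tan_eq_sin_div_cos]
  field_simp
  ring

theorem cos_omegaA_add_eq_jacobiWKB (a b N : ℝ) {θ : ℝ} (hθ : θ ∈ Ioo 0 π) :
    cos (omegaA a (N * θ)) + N⁻¹ * F1fn a b N θ = jacobiWKB a b N θ := by
  have hphase : omegaA a (N * θ) = N * θ - (a * π / 2 + π / 4) := by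
    rw [omegaA]
    ring
  have hphase' : omegaA (a + 1) (N * θ) = N * θ - (a * π / 2 + π / 4) - π / 2 := by
    rw [omegaA]
    ring
  rw [F1fn, F2fn_eq_jacobiCorrection a b hθ, hphase, hphase', cos_sub_pi_div_two, jacobiWKB,
    wkbApprox]

theorem jacobiP_eq_mAB_mul_jacobiLiouville {a b : ℝ} (ha : -1 < a) (hb : -1 < b) {N : ℝ}
    (hN : 0 < N) (n : ℕ) {θ : ℝ} (hθ : θ ∈ Ioo 0 π) :
    jacobiP a b n (cos θ) =
      N ^ (-(1 / 2) : ℝ) * mAB a b θ * (√(π * N) * jacobiLiouville a b n θ) := by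
  have hcancel {x : ℝ} (hx : 0 < x) (p : ℝ) : x ^ (-p) * x ^ p = 1 := by
    rw [← rpow_add hx, neg_add_cancel, rpow_zero]
  rw [jacobiP_eq_jacobiSum ha hb, mAB, jacobiLiouville, halfWeight, sqrt_eq_rpow,
    mul_rpow pi_pos.le hN.le, ← neg_add', ← neg_add']
  have hprod : N ^ (-(1 / 2) : ℝ) * N ^ (1 / 2 : ℝ) * (π ^ (-(1 / 2) : ℝ) * π ^ (1 / 2 : ℝ)) *
      (sin (θ / 2) ^ (-(a + 1 / 2)) * sin (θ / 2) ^ (a + 1 / 2)) *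
      (cos (θ / 2) ^ (-(b + 1 / 2)) * cos (θ / 2) ^ (b + 1 / 2)) = 1 := by
    rw [hcancel hN, hcancel pi_pos, hcancel (sin_half_pos hθ), hcancel (cos_half_pos hθ)]
    norm_num
  linear_combination -jacobiSum (n + a) (n + b) n (cos θ) * hprod

theorem mAB_pos (a b : ℝ) {θ : ℝ} (hθ : θ ∈ Ioo 0 π) : 0 < mAB a b θ :=
  mul_pos (mul_pos (rpow_pos_of_pos pi_pos _) (rpow_pos_of_pos (sin_half_pos hθ) _))
    (rpow_pos_of_pos (cos_half_pos hθ) _)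

theorem jacobiP_sub_eq_mul_jacobiError {a b : ℝ} (ha : -1 < a) (hb : -1 < b) {n : ℕ}
    (hN : 0 < shiftedDegree a b n) {θ : ℝ} (hθ : θ ∈ Ioo 0 π) :
    jacobiP a b n (cos θ) - shiftedDegree a b n ^ (-(1 / 2) : ℝ) * mAB a b θ *
      (cos (omegaA a (shiftedDegree a b n * θ)) +
        (shiftedDegree a b n)⁻¹ * F1fn a b (shiftedDegree a b n) θ) =
      shiftedDegree a b n ^ (-(1 / 2) : ℝ) * mAB a b θ * jacobiError a b n θ := by
  rw [jacobiP_eq_mAB_mul_jacobiLiouville ha hb hN n hθ, cos_omegaA_add_eq_jacobiWKB a b _ hθ,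
    jacobiError, mul_sub]

theorem half_le_shiftedDegree {a b : ℝ} (h : -2 ≤ a + b) {n : ℕ} (hn : 1 ≤ n) :
    (n : ℝ) / 2 ≤ shiftedDegree a b n := by
  have : (1 : ℝ) ≤ n := mod_cast hn
  rw [shiftedDegree]
  linarith

theorem exists_abs_jacobiError_le_rpow {a b : ℝ} (ha : -1 < a) (hb : -1 < b) {c ε : ℝ} (hc : 0 < c)
    (hε : 0 < ε) : ∃ C, 0 < C ∧ ∀ n : ℕ, 1 ≤ n → ∀ θ : ℝ, c / n ≤ θ → θ ≤ π - ε →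
      |jacobiError a b n θ| ≤ C * ((n : ℝ) ^ (-2 : ℝ) * θ ^ (-2 : ℝ)) := by
  obtain ⟨C, hC, herror⟩ := exists_abs_jacobiError_le ha hb (half_pos hc) hε
  refine ⟨4 * C, by positivity, fun n hn θ hcθ hθε => ?_⟩
  have hn₀ : (0 : ℝ) < n := mod_cast hn
  have hθ : 0 < θ := (div_pos hc hn₀).trans_le hcθ
  have hN := half_le_shiftedDegree (a := a) (b := b) (by linarith) hn
  have hcN : c / 2 ≤ shiftedDegree a b n * θ :=
    calc c / 2 ≤ n / 2 * θ := by
          rw [div_le_iff₀' hn₀] at hcθ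
          linarith
      _ ≤ _ := by gcongr
  obtain ⟨m, rfl⟩ := Nat.exists_eq_add_of_le' hn
  calc _ ≤ C / (shiftedDegree a b (m + 1) ^ 2 * θ ^ 2) := herror m θ ⟨hθ, hθε⟩ hcN
    _ ≤ C / (((m + 1 : ℕ) / 2 : ℝ) ^ 2 * θ ^ 2) := by gcongr
    _ = _ := by
      rw [rpow_neg hn₀.le, rpow_neg hθ.le, rpow_two, rpow_two]
      field_simp
      norm_num

end JacobiAsymptotics

open JacobiAsymptotics in
theorem jacobi_two_term_asymptotics_general {α β : ℝ} (hα : -1 < α) (hβ : -1 < β) {c ε : ℝ}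
    (hc : 0 < c) (hε : 0 < ε) :
    ∃ C : ℝ, 0 < C ∧
      ∀ ℓ : ℕ, 1 ≤ ℓ → ∀ θ : ℝ, c / (ℓ : ℝ) ≤ θ → θ ≤ Real.pi - ε →
        |jacobiP α β ℓ (Real.cos θ) -
            ((ℓ : ℝ) + (α + β + 1) / 2) ^ (-(1 / 2 : ℝ)) * mAB α β θ *
              (Real.cos (omegaA α (((ℓ : ℝ) + (α + β + 1) / 2) * θ)) +
                ((ℓ : ℝ) + (α + β + 1) / 2)⁻¹ *
                  F1fn α β ((ℓ : ℝ) + (α + β + 1) / 2) θ)| ≤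
          C * ((ℓ : ℝ) + (α + β + 1) / 2) ^ (-(1 / 2 : ℝ)) * mAB α β θ *
            ((ℓ : ℝ) ^ (-(2 : ℝ)) * θ ^ (-(2 : ℝ))) := by
  obtain ⟨C, hC, herror⟩ := exists_abs_jacobiError_le_rpow hα hβ hc hε
  refine ⟨C, hC, fun ℓ hℓ θ hcθ hθε => ?_⟩
  have hℓ₀ : (0 : ℝ) < ℓ := mod_cast hℓ
  have hθ : θ ∈ Set.Ioo 0 π := ⟨(div_pos hc hℓ₀).trans_le hcθ, by linarith⟩
  have hN : 0 < shiftedDegree α β ℓ :=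
    (half_pos hℓ₀).trans_le (half_le_shiftedDegree (by linarith) hℓ)
  have hprefactor : 0 < shiftedDegree α β ℓ ^ (-(1 / 2) : ℝ) * mAB α β θ :=
    mul_pos (rpow_pos_of_pos hN _) (mAB_pos α β hθ)
  rw [← shiftedDegree, jacobiP_sub_eq_mul_jacobiError hα hβ hN hθ, abs_mul, abs_of_pos hprefactor]
  exact (mul_le_mul_of_nonneg_left (herror ℓ hℓ θ hcθ hθε) hprefactor.le).trans_eq (by ring)

/-- Lemma 2.3 ii): two-term asymptotics of the Jacobi polynomial.  For
`α,β > −1/2` with `α − β > −4`, and `0 < ε < π`, for `ℓ ≥ 1` and `c/ℓ ≤ θ ≤ π − ε`,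
`|P_ℓ^{(α,β)}(cos θ) − ℓ̃^{−1/2} m_{α,β}(θ)[cos ω_α(ℓ̃θ) + ℓ̃^{−1}F^{(1)}_{α,β}(ℓ̃,θ)]|
  ≤ C ℓ̃^{−1/2} m_{α,β}(θ)(ℓ^{û(α)} θ^{ν̂(α)} + ℓ^{−2} θ^{−2})`,
with `c = c(α,β) > 0` and `C = C(ε,α,β) > 0`, where `ℓ̃ = ℓ + (α+β+1)/2`. -/
theorem jacobi_two_term_asymptotics (α β : ℝ)
    (hα : -(1 / 2 : ℝ) < α) (hβ : -(1 / 2 : ℝ) < β) (hαβ : -4 < α - β) :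
    ∃ c : ℝ, 0 < c ∧
      ∀ ε : ℝ, 0 < ε → ε < Real.pi →
        ∃ C : ℝ, 0 < C ∧
          ∀ ℓ : ℕ, 1 ≤ ℓ → ∀ θ : ℝ, c / (ℓ : ℝ) ≤ θ → θ ≤ Real.pi - ε →
            |jacobiP α β ℓ (Real.cos θ) -
                ((ℓ : ℝ) + (α + β + 1) / 2) ^ (-(1 / 2 : ℝ)) * mAB α β θ *
                  (Real.cos (omegaA α (((ℓ : ℝ) + (α + β + 1) / 2) * θ)) +
                    ((ℓ : ℝ) + (α + β + 1) / 2)⁻¹ *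
                      F1fn α β ((ℓ : ℝ) + (α + β + 1) / 2) θ)| ≤
              C * ((ℓ : ℝ) + (α + β + 1) / 2) ^ (-(1 / 2 : ℝ)) * mAB α β θ *
                ((ℓ : ℝ) ^ uHat α * θ ^ nuHat α + (ℓ : ℝ) ^ (-(2 : ℝ)) * θ ^ (-(2 : ℝ))) := by
  refine ⟨1, one_pos, fun ε hε _ => ?_⟩
  obtain ⟨C, hC, hbound⟩ := jacobi_two_term_asymptotics_general (by linarith : -1 < α)
    (by linarith : -1 < β) one_pos hε
  refine ⟨C, hC, fun ℓ hℓ θ hθ hθε => (hbound ℓ hℓ θ hθ hθε).trans ?_⟩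
  have hℓ₀ : (1 : ℝ) ≤ ℓ := mod_cast hℓ
  have hθ₀ : 0 < θ := (by positivity : (0 : ℝ) < 1 / ℓ).trans_le hθ
  have hm := JacobiAsymptotics.mAB_pos α β ⟨hθ₀, by linarith⟩
  have hN : 0 ≤ (ℓ : ℝ) + (α + β + 1) / 2 := by linarith
  gcongr
  exact le_add_of_nonneg_left (by positivity)
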